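/- arXiv:1905.00368 — 2 statements merged into one kernel-verified Lean document; each statement's English description precedes it below -/
import Mathlib

section
/- For all μ, ν ∈ 𝒫_p(𝒳_1 × 𝒳_2), the two-timepoint causal Wasserstein distance CW_p(μ,ν) := inf{(E_π[ρ(X_1,Y_1)^p + ρ(X_2,Y_2)^p])^{1/p} : π a coupling of μ and ν such that π(Y_1 ∈ A | X_1, X_2) = π(Y_1 ∈ A | X_1) π-a.s. for all Borel A ⊆ 𝒳_1} satisfies CW_p(μ,ν) = CW̄_p(disint_{𝒳_1}(μ), disint_{𝒳_1}(ν)); that is, CW̄_p is an extension of CW_p under the embedding of 𝒫_p(𝒳_1 × 𝒳_2) into 𝒫_p(𝒳_1 × 𝒫_p(𝒳_2)) by disintegration. -/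
open MeasureTheory ProbabilityTheory ENNReal Filter Topology

noncomputable section

namespace AWPaper

/-! ### Generic constructions -/

variable {α β : Type*}

/-- The set of couplings of two measures. -/
def Cpl [MeasurableSpace α] [MeasurableSpace β] (μ : Measure α) (ν : Measure β) :
    Set (Measure (α × β)) :=
  {π | π.map Prod.fst = μ ∧ π.map Prod.snd = ν}

/-- The `p`-Wasserstein distance (with values in `ℝ≥0∞`) associated to an
`ℝ≥0∞`-valued distance function `d`. -/
def Wp [MeasurableSpace α] (p : ℝ) (d : α → α → ℝ≥0∞) (μ ν : Measure α) : ℝ≥0∞ :=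
  ⨅ π ∈ Cpl μ ν, (∫⁻ z, d z.1 z.2 ^ p ∂π) ^ (1 / p)

/-- The topology generated by the open balls of an `ℝ≥0∞`-valued distance
function.  For a genuine metric this is the metric topology. -/
def ballTop (d : α → α → ℝ≥0∞) : TopologicalSpace α :=
  TopologicalSpace.generateFrom {s | ∃ x ε, 0 < ε ∧ s = {y | d x y < ε}}

/-- The product distance of two `ℝ≥0∞`-valued distances, `ℓ^p`-style. -/
def prodDist (p : ℝ) (d₁ : α → α → ℝ≥0∞) (d₂ : β → β → ℝ≥0∞) :
    α × β → α × β → ℝ≥0∞ :=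
  fun u v => (d₁ u.1 v.1 ^ p + d₂ u.2 v.2 ^ p) ^ (1 / p)

/-- Membership in the `p`-Wasserstein space: a probability measure with finite
`p`-th moment (w.r.t. the distance function `d`). -/
def MemPp [MeasurableSpace α] (p : ℝ) (d : α → α → ℝ≥0∞) (μ : Measure α) : Prop :=
  IsProbabilityMeasure μ ∧ ∃ x₀, ∫⁻ x, d x₀ x ^ p ∂μ ≠ ∞

/-- The weak topology on measures induced by integration of bounded continuous
functions, for a given topology `τ` on the base space. -/
def weakTop [MeasurableSpace α] (τ : TopologicalSpace α) : TopologicalSpace (Measure α) :=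
  TopologicalSpace.induced
    (fun μ => fun f : @BoundedContinuousFunction α ℝ τ _ => ∫ x, f x ∂μ)
    Pi.topologicalSpace

/-- The product topology built from two explicitly given topologies. -/
def prodTop (τ₁ : TopologicalSpace α) (τ₂ : TopologicalSpace β) : TopologicalSpace (α × β) :=
  TopologicalSpace.induced Prod.fst τ₁ ⊓ TopologicalSpace.induced Prod.snd τ₂

/-- An everywhere-defined version of the disintegration kernel: it agrees with
`Measure.condKernel` on finite measures. -/
def condK [MeasurableSpace α] [MeasurableSpace β] [StandardBorelSpace β] [Nonempty β]
    (ρ : Measure (α × β)) : Kernel α β :=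
  letI := Classical.dec (IsFiniteMeasure ρ)
  if h : IsFiniteMeasure ρ then @Measure.condKernel α β _ _ _ _ ρ h else 0

/-- The disintegration map `𝒫(A × B) → 𝒫(A × 𝒫(B))`. -/
def disint [MeasurableSpace α] [MeasurableSpace β] [StandardBorelSpace β] [Nonempty β]
    (μ : Measure (α × β)) : Measure (α × Measure β) :=
  μ.map (fun z => (z.1, condK μ z.1))

/-- The intensity ("und") map `𝒫(A × 𝒫(B)) → 𝒫(A × B)`. -/
def und [MeasurableSpace α] [MeasurableSpace β] (μ : Measure (α × Measure β)) :
    Measure (α × β) :=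
  μ.bind (fun z => (Measure.dirac z.1).prod z.2)

/-! ### Path spaces -/

variable {X : Type*} [MeasurableSpace X]

/-- The path-space distance `ρ̄((x_t),(y_t)) = (∑ ρ(x_t,y_t)^p)^{1/p}`. -/
def pathDist (p : ℝ) (d : X → X → ℝ≥0∞) {N : ℕ} :
    (Fin N → X) → (Fin N → X) → ℝ≥0∞ :=
  fun x y => (∑ t, d (x t) (y t) ^ p) ^ (1 / p)

/-- The first `t` coordinates of a path. -/
def restr {N : ℕ} (t : ℕ) (h : t ≤ N) (x : Fin N → X) : Fin t → X :=
  fun s => x (Fin.castLE h s)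

/-- The last `N - t` coordinates of a path. -/
def tailr {N : ℕ} (t : ℕ) (h : t ≤ N) (x : Fin N → X) : Fin (N - t) → X :=
  fun s => x ⟨t + s.1, by have := s.2; omega⟩

/-- A coupling `π` of two path measures is causal: for every `t` and Borel
`A ⊆ 𝒳^t`, `π((Y_1,…,Y_t) ∈ A | X) = π((Y_1,…,Y_t) ∈ A | X_1,…,X_t)` a.s. -/
def Causal {N : ℕ} (π : Measure ((Fin N → X) × (Fin N → X))) : Prop :=
  ∀ (t : ℕ) (h : t ≤ N) (A : Set (Fin t → X)), MeasurableSet A →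
    (π[fun z => A.indicator (fun _ => (1 : ℝ)) (restr t h z.2) |
        MeasurableSpace.comap Prod.fst inferInstance])
      =ᵐ[π]
    (π[fun z => A.indicator (fun _ => (1 : ℝ)) (restr t h z.2) |
        MeasurableSpace.comap (fun z => restr t h z.1) inferInstance])

/-- Bicausal couplings. -/
def Bicausal {N : ℕ} (π : Measure ((Fin N → X) × (Fin N → X))) : Prop :=
  Causal π ∧ Causal (π.map Prod.swap)

/-- The causal Wasserstein "distance" `CW_p`. -/
def CW (p : ℝ) (d : X → X → ℝ≥0∞) {N : ℕ} (μ ν : Measure (Fin N → X)) : ℝ≥0∞ :=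
  ⨅ π ∈ {π ∈ Cpl μ ν | Causal π}, (∫⁻ z, pathDist p d z.1 z.2 ^ p ∂π) ^ (1 / p)

/-- The symmetrized causal Wasserstein distance `SCW_p`. -/
def SCW (p : ℝ) (d : X → X → ℝ≥0∞) {N : ℕ} (μ ν : Measure (Fin N → X)) : ℝ≥0∞ :=
  max (CW p d μ ν) (CW p d ν μ)

/-- The adapted (nested, bicausal) Wasserstein distance `AW_p`. -/
def AW (p : ℝ) (d : X → X → ℝ≥0∞) {N : ℕ} (μ ν : Measure (Fin N → X)) : ℝ≥0∞ :=
  ⨅ π ∈ {π ∈ Cpl μ ν | Bicausal π}, (∫⁻ z, pathDist p d z.1 z.2 ^ p ∂π) ^ (1 / p)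

/-! ### Nested spaces (Pflug's nested distributions / Vershik's iterated spaces) -/

/-- A measurable space together with an `ℝ≥0∞`-valued distance. -/
structure QMS : Type 1 where
  carrier : Type
  inst : MeasurableSpace carrier
  dist : carrier → carrier → ℝ≥0∞

/-- The nested sequence of spaces: `nest X _ d p 0 = 𝒳` (this is `𝒳_N`), and
`nest X _ d p (k+1) = 𝒳 × 𝒫(nest X _ d p k)` with the nested distance
`D = (ρ^p + 𝒲_p^p)^{1/p}`.  Thus `𝒳_1` (for `N = k+1` time points) is
`nest X _ d p k`. -/
def nest (X : Type) (mX : MeasurableSpace X) (d : X → X → ℝ≥0∞) (p : ℝ) : ℕ → QMS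
  | 0 => ⟨X, mX, d⟩
  | (k + 1) =>
    let Q := nest X mX d p k
    ⟨X × @Measure Q.carrier Q.inst,
      @Prod.instMeasurableSpace _ _ mX (@Measure.instMeasurableSpace _ Q.inst),
      fun a b => (d a.1 b.1 ^ p + (@Wp _ Q.inst p Q.dist a.2 b.2) ^ p) ^ (1 / p)⟩

section NMapSec

variable (Y : Type) [mY : MeasurableSpace Y] [TopologicalSpace Y] [PolishSpace Y]
  [BorelSpace Y] [Nonempty Y]

/-- The map `𝒩` sending the law of a process with `k+1` time steps to the
corresponding nested distribution, via iterated regular conditional laws. -/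
def NMap (d : Y → Y → ℝ≥0∞) (p : ℝ) :
    ∀ k : ℕ, Measure (Fin (k + 1) → Y) →
      @Measure (nest Y mY d p k).carrier (nest Y mY d p k).inst
  | 0, μ =>
    letI : MeasurableSpace (nest Y mY d p 0).carrier := (nest Y mY d p 0).inst
    μ.map (fun x => x 0)
  | (k + 1), μ =>
    letI : MeasurableSpace (nest Y mY d p k).carrier := (nest Y mY d p k).inst
    letI : MeasurableSpace (nest Y mY d p (k + 1)).carrier := (nest Y mY d p (k + 1)).inst
    (μ.map (fun x => x 0)).map
      (fun x₀ => (x₀, NMap d p k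
        ((condK (μ.map (fun x => (x 0, fun s : Fin (k + 1) => x s.succ)))) x₀)))

end NMapSec

section PathStructures

variable {Y : Type*} [mY : MeasurableSpace Y]

/-- A process `L` is adapted: `L t` depends only on the first `t+1` coordinates. -/
def AdaptedProc {N : ℕ} (L : Fin N → (Fin N → Y) → ℝ) : Prop :=
  ∀ (t : Fin N) (x y : Fin N → Y), (∀ s : Fin N, s ≤ t → x s = y s) → L t x = L t y

/-- `τ` is a stopping time of the canonical filtration on the path space. -/
def IsStopTime {N : ℕ} (τ : (Fin N → Y) → Fin N) : Prop :=
  ∀ t : Fin N,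
    MeasurableSet[MeasurableSpace.comap (restr (X := Y) (t.1 + 1) t.2) inferInstance]
      {x | τ x = t}

/-- The optimal stopping value `v^L(μ)`. -/
def stopVal {N : ℕ} (L : Fin N → (Fin N → Y) → ℝ) (μ : Measure (Fin N → Y)) : ℝ :=
  ⨅ τ : {τ : (Fin N → Y) → Fin N // IsStopTime τ}, ∫ x, L (τ.1 x) x ∂μ

variable [TopologicalSpace Y]

/-- `AC(X̄)`: adapted processes which are continuous and bounded. -/
def ACbdd {N : ℕ} (L : Fin N → (Fin N → Y) → ℝ) : Prop :=
  (∀ t, Continuous (L t)) ∧ AdaptedProc L ∧ ∃ C : ℝ, ∀ t x, |L t x| ≤ C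

/-- `AC_p(X̄)`: adapted continuous processes of growth of order `p`. -/
def ACp (p : ℝ) (d : Y → Y → ℝ≥0∞) {N : ℕ} (L : Fin N → (Fin N → Y) → ℝ) : Prop :=
  (∀ t, Continuous (L t)) ∧ AdaptedProc L ∧
    ∃ (C : ℝ) (x₀ : Fin N → Y), ∀ t x, |L t x| ≤ C * (1 + ((pathDist p d x₀ x) ^ p).toReal)

/-- The optimal stopping topology (weak version, bounded continuous rewards). -/
def stopTopW (N : ℕ) : TopologicalSpace (Measure (Fin N → Y)) :=
  ⨅ L : {L : Fin N → (Fin N → Y) → ℝ // ACbdd L},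
    TopologicalSpace.induced (stopVal L.1) inferInstance

/-- The `𝒲_p`-optimal stopping topology. -/
def stopTopWp (p : ℝ) (d : Y → Y → ℝ≥0∞) (N : ℕ) :
    TopologicalSpace (Measure (Fin N → Y)) :=
  ⨅ L : {L : Fin N → (Fin N → Y) → ℝ // ACp p d L},
    TopologicalSpace.induced (stopVal L.1) inferInstance

variable [PolishSpace Y] [BorelSpace Y] [Nonempty Y]

/-- Hellwig's map `I_t`, sending `μ` to the joint law of the first `t`
coordinates together with the conditional law of the remaining coordinates. -/
def infoMap (N t : ℕ) (h : t ≤ N) (μ : Measure (Fin N → Y)) :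
    Measure ((Fin t → Y) × Measure (Fin (N - t) → Y)) :=
  μ.map (fun x => (restr t h x,
    condK (μ.map (fun y => (restr t h y, tailr t h y))) (restr t h x)))

/-- Hellwig's information topology (weak version). -/
def infoTopW (N : ℕ) : TopologicalSpace (Measure (Fin N → Y)) :=
  ⨅ (t : ℕ) (_ : 1 ≤ t) (h : t ≤ N - 1),
    TopologicalSpace.induced (infoMap N t (le_trans h (Nat.sub_le N 1)))
      (weakTop (prodTop Pi.topologicalSpace (weakTop Pi.topologicalSpace)))

/-- The `𝒲_p`-information topology. -/
def infoTopWp (p : ℝ) (d : Y → Y → ℝ≥0∞) (N : ℕ) :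
    TopologicalSpace (Measure (Fin N → Y)) :=
  ⨅ (t : ℕ) (_ : 1 ≤ t) (h : t ≤ N - 1),
    TopologicalSpace.induced (infoMap N t (le_trans h (Nat.sub_le N 1)))
      (ballTop (Wp p (prodDist p (pathDist p d) (Wp p (pathDist p d)))))

/-- Aldous' prediction process `Z_t^μ` (as a function of the path). -/
def predict (N : ℕ) (μ : Measure (Fin N → Y)) (t : ℕ) (h : t ≤ N) :
    (Fin N → Y) → Measure (Fin N → Y) :=
  fun x => condK (μ.map (fun y => (restr t h y, y))) (restr t h x)

/-- Aldous' map `E`, sending `μ` to the joint law of the path together with its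
prediction process. -/
def aldousMap (N : ℕ) (μ : Measure (Fin N → Y)) :
    Measure ((Fin N → Y) × (Fin (N + 1) → Measure (Fin N → Y))) :=
  μ.map (fun x =>
    (x, fun t : Fin (N + 1) => predict N μ t.1 (Nat.lt_succ_iff.mp t.2) x))

/-- Aldous' extended weak topology. -/
def aldousTopW (N : ℕ) : TopologicalSpace (Measure (Fin N → Y)) :=
  TopologicalSpace.induced (aldousMap N)
    (weakTop (prodTop Pi.topologicalSpace
      (@Pi.topologicalSpace (Fin (N + 1)) (fun _ => Measure (Fin N → Y))
        (fun _ => weakTop Pi.topologicalSpace))))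

/-- The extended `𝒲_p`-topology. -/
def aldousTopWp (p : ℝ) (d : Y → Y → ℝ≥0∞) (N : ℕ) :
    TopologicalSpace (Measure (Fin N → Y)) :=
  TopologicalSpace.induced (aldousMap N)
    (ballTop (Wp p (prodDist p (pathDist p d)
      (fun Z Z' : Fin (N + 1) → Measure (Fin N → Y) =>
        (∑ t, Wp p (pathDist p d) (Z t) (Z' t) ^ p) ^ (1 / p)))))

end PathStructures

/-! ### The lifted two-time-point space `𝒳₁ × 𝒫_p(𝒳₂)` -/

section Lifted

variable {A B : Type*} [MeasurableSpace A] [MeasurableSpace B]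

/-- The nested distance on `𝒳₁ × 𝒫_p(𝒳₂)`. -/
def liftDist (p : ℝ) (dA : A → A → ℝ≥0∞) (dB : B → B → ℝ≥0∞) :
    (A × Measure B) → (A × Measure B) → ℝ≥0∞ :=
  fun u v => (dA u.1 v.1 ^ p + Wp p dB u.2 v.2 ^ p) ^ (1 / p)

/-- `η` is a version of the measure-valued conditional expectation
`E_γ[X̂₂ | Y⃗]` (i.e. the barycenter of a regular conditional law of `X̂₂`
given `Y⃗ = (Y₁, Ŷ₂)`). -/
def IsCondBar (γ : Measure ((A × Measure B) × (A × Measure B)))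
    (η : (A × Measure B) × (A × Measure B) → Measure B) : Prop :=
  (∃ g : (A × Measure B) → Measure B, Measurable g ∧ ∀ z, η z = g z.2) ∧
  (∀ z, IsProbabilityMeasure (η z)) ∧
  ∀ S : Set (A × Measure B), MeasurableSet S → ∀ E : Set B, MeasurableSet E →
    ∫⁻ z in {z | z.2 ∈ S}, η z E ∂γ = ∫⁻ z in {z | z.2 ∈ S}, z.1.2 E ∂γ

/-- `AW̄_p`, the `p`-Wasserstein distance on `𝒫_p(𝒳₁ × 𝒫_p(𝒳₂))`. -/
def AWbar (p : ℝ) (dA : A → A → ℝ≥0∞) (dB : B → B → ℝ≥0∞)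
    (μ ν : Measure (A × Measure B)) : ℝ≥0∞ :=
  Wp p (liftDist p dA dB) μ ν

/-- `CW̄_p`, the lifted causal Wasserstein "distance". -/
def CWbar (p : ℝ) (dA : A → A → ℝ≥0∞) (dB : B → B → ℝ≥0∞)
    (μ ν : Measure (A × Measure B)) : ℝ≥0∞ :=
  ⨅ γ ∈ Cpl μ ν, ⨅ η ∈ {η | IsCondBar γ η},
    (∫⁻ z, (dA z.1.1 z.2.1 ^ p + Wp p dB (η z) z.2.2 ^ p) ∂γ) ^ (1 / p)

/-- `SCW̄_p`, the symmetrization of `CW̄_p`. -/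
def SCWbar (p : ℝ) (dA : A → A → ℝ≥0∞) (dB : B → B → ℝ≥0∞)
    (μ ν : Measure (A × Measure B)) : ℝ≥0∞ :=
  max (CWbar p dA dB μ ν) (CWbar p dA dB ν μ)

/-- Membership in `𝒫_p(𝒳₁ × 𝒫_p(𝒳₂))`: a probability measure, concentrated on
`𝒳₁ × 𝒫_p(𝒳₂)`, with finite `p`-th moment for the nested distance. -/
def MemPpLift (p : ℝ) (dA : A → A → ℝ≥0∞) (dB : B → B → ℝ≥0∞)
    (μ : Measure (A × Measure B)) : Prop :=
  IsProbabilityMeasure μ ∧ (∀ᵐ z ∂μ, MemPp p dB z.2) ∧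
    ∃ z₀ : A × Measure B, MemPp p dB z₀.2 ∧ ∫⁻ z, liftDist p dA dB z₀ z ^ p ∂μ ≠ ∞

/-- Two-time-point causality: given a coupling `π` of measures on products
`A₁ × B₁` and `A₂ × B₂`, the conditional law of `Y₁` given `X = (X₁, X₂)`
coincides with the conditional law of `Y₁` given `X₁`. -/
def Causal2 {A₁ B₁ A₂ B₂ : Type*} [MeasurableSpace A₁] [MeasurableSpace B₁]
    [MeasurableSpace A₂] [MeasurableSpace B₂]
    (π : Measure ((A₁ × B₁) × (A₂ × B₂))) : Prop :=
  ∀ S : Set A₂, MeasurableSet S →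
    (π[fun z => S.indicator (fun _ => (1 : ℝ)) z.2.1 |
        MeasurableSpace.comap Prod.fst inferInstance])
      =ᵐ[π]
    (π[fun z => S.indicator (fun _ => (1 : ℝ)) z.2.1 |
        MeasurableSpace.comap (fun z => z.1.1) inferInstance])

/-- The two-time-point causal Wasserstein "distance" on `𝒫_p(𝒳₁ × 𝒳₂)`. -/
def CW2 (p : ℝ) (dA : A → A → ℝ≥0∞) (dB : B → B → ℝ≥0∞)
    (μ ν : Measure (A × B)) : ℝ≥0∞ :=
  ⨅ π ∈ {π ∈ Cpl μ ν | Causal2 π},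
    (∫⁻ z, (dA z.1.1 z.2.1 ^ p + dB z.1.2 z.2.2 ^ p) ∂π) ^ (1 / p)

end Lifted

/-!
Disintegrating the marginals of a causal coupling `π` gives a coupling of `disint μ` and
`disint ν`, and by causality the barycenter of `X̂₂` given `Y⃗` is the conditional law of `X₂` given
`Y₁`. Conditioning `π` on `Y₁` therefore couples this barycenter with `Ŷ₂`, whence `CW̄_p ≤ CW_p`.

Conversely, a coupling `γ` is lifted to a causal coupling by drawing `(X₂, Y₂)` given `Y⃗` from an
almost optimal coupling of the barycenter with `Ŷ₂`, and gluing this with the law of `X₂` given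
`X₁`; the barycenter condition is the compatibility required for the gluing. The almost optimal
coupling must depend measurably on `Y⃗`. It is selected from a sequence of coupling kernels: after a
countable measurable discretization of the space, the completions of the finitely supported partial
plans with rational weights come arbitrarily close to the optimal cost.
-/

section Gluing

variable {γ δ Ω : Type*} [MeasurableSpace α] [MeasurableSpace β] [MeasurableSpace γ]
  [MeasurableSpace δ] [MeasurableSpace Ω]

lemma exists_kernel_glue [StandardBorelSpace γ] [Nonempty γ]
    [MeasurableSpace.CountableOrCountablyGenerated Ω β] (κ : Kernel Ω α) [IsFiniteKernel κ]
    (η : Kernel Ω (β × γ)) [IsFiniteKernel η] {f : α → β} (hf : Measurable f)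
    (h : κ.map f = η.fst) :
    ∃ θ : Kernel Ω (α × γ), θ.fst = κ ∧ θ.map (Prod.map f id) = η := by
  let ξ : Kernel (Ω × α) γ := η.condKernel.comap (Prod.map id f) (by fun_prop)
  refine ⟨κ ⊗ₖ ξ, Kernel.fst_compProd κ ξ, ?_⟩
  conv_rhs => rw [← η.disintegrate η.condKernel, ← h]
  ext ω s hs
  have hs' : MeasurableSet (Prod.map f id ⁻¹' s) := (by fun_prop : Measurable (Prod.map f id)) hs
  rw [Kernel.map_apply' _ (by fun_prop) _ hs, Kernel.compProd_apply hs', Kernel.compProd_apply hs,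
    Kernel.lintegral_map _ hf _ (Kernel.measurable_kernel_prodMk_left' hs ω)]
  rfl

lemma exists_measure_glue [StandardBorelSpace γ] [Nonempty γ]
    (μ : Measure α) [IsFiniteMeasure μ] (ν : Measure (β × γ)) [IsFiniteMeasure ν] {f : α → β}
    (hf : Measurable f) (h : μ.map f = ν.fst) :
    ∃ θ : Measure (α × γ), θ.fst = μ ∧ θ.map (Prod.map f id) = ν := by
  obtain ⟨θ, hθ₁, hθ₂⟩ := exists_kernel_glue (Kernel.const Unit μ) (Kernel.const Unit ν) hf
    (by rw [Kernel.map_const _ hf, h, Kernel.fst_eq, Kernel.map_const _ measurable_fst,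
      Measure.fst])
  refine ⟨θ (), ?_, ?_⟩
  · rw [← Kernel.const_apply μ (), ← hθ₁, Kernel.fst_apply, Measure.fst]
  · rw [← Kernel.map_apply _ (by fun_prop), hθ₂, Kernel.const_apply]

/-- Couplings lift along maps: glue `a` to `κ` along `f`, then `b` to the result along `g`. -/
lemma exists_coupling_kernel_lift [StandardBorelSpace α] [Nonempty α] [StandardBorelSpace δ]
    [Nonempty δ] [MeasurableSpace.CountableOrCountablyGenerated Ω γ]
    (a : Kernel Ω α) [IsFiniteKernel a] (b : Kernel Ω β) [IsFiniteKernel b]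
    {f : α → γ} (hf : Measurable f) {g : β → δ} (hg : Measurable g)
    (κ : Kernel Ω (γ × δ)) [IsFiniteKernel κ] (hκ₁ : κ.fst = a.map f) (hκ₂ : κ.snd = b.map g) :
    ∃ θ : Kernel Ω (α × β), θ.fst = a ∧ θ.snd = b ∧ θ.map (Prod.map f g) = κ := by
  obtain ⟨θ₁, hθ₁, hθ₁κ⟩ := exists_kernel_glue a κ hf hκ₁.symm
  have : IsFiniteKernel θ₁ := Kernel.isFiniteKernel_of_isFiniteKernel_fst (h := hθ₁ ▸ inferInstance)
  have h : b.map g = θ₁.swapRight.fst := by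
    rw [Kernel.fst_swapRight, ← hκ₂, ← hθ₁κ]
    simp only [Kernel.snd_eq]
    rw [← Kernel.map_comp_right _ (by fun_prop) (by fun_prop)]
    rfl
  obtain ⟨θ₂, hθ₂, hθ₂θ₁⟩ := exists_kernel_glue b θ₁.swapRight hg h
  refine ⟨θ₂.swapRight, ?_, by rw [Kernel.snd_swapRight, hθ₂], ?_⟩
  · rw [Kernel.fst_swapRight, ← hθ₁, ← Kernel.snd_swapRight, ← hθ₂θ₁]
    simp only [Kernel.snd_eq]
    rw [← Kernel.map_comp_right _ (by fun_prop) (by fun_prop)]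
    rfl
  · rw [← hθ₁κ]
    have hθ₁' : θ₁ = θ₁.swapRight.swapRight := by
      simp only [Kernel.swapRight_eq]
      rw [← Kernel.map_comp_right _ (by fun_prop) (by fun_prop), Prod.swap_swap_eq, Kernel.map_id]
    rw [hθ₁', ← hθ₂θ₁]
    simp only [Kernel.swapRight_eq]
    iterate 3 rw [← Kernel.map_comp_right _ (by fun_prop) (by fun_prop)]
    rfl

end Gluing

section Completion

variable [MeasurableSpace α] [MeasurableSpace β]

/-- The completion of a partial transport plan `σ`, whose marginals are dominated by `m` and `n`,
to a coupling of the probability measures `m` and `n`: the unmatched mass is coupled independently.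
If `σ` has mass `1` then the factor is `0⁻¹ = ∞`, but it multiplies the zero measure. -/
def completion (σ : Measure (α × β)) (m : Measure α) (n : Measure β) : Measure (α × β) :=
  σ + (1 - σ Set.univ)⁻¹ • (m - σ.fst).prod (n - σ.snd)

lemma inv_mul_smul_self (μ : Measure α) [IsFiniteMeasure μ] :
    ((μ Set.univ)⁻¹ * μ Set.univ) • μ = μ := by
  rcases eq_or_ne μ 0 with rfl | hμ
  · exact smul_zero _
  · rw [ENNReal.inv_mul_cancel (Measure.measure_univ_ne_zero.2 hμ) (measure_ne_top μ _), one_smul]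

variable {σ : Measure (α × β)} [IsFiniteMeasure σ] {m : Measure α} [IsProbabilityMeasure m]
  {n : Measure β} [IsProbabilityMeasure n]

lemma sub_fst_univ (hm : σ.fst ≤ m) : (m - σ.fst) Set.univ = 1 - σ Set.univ := by
  rw [Measure.sub_apply .univ hm, measure_univ, Measure.fst_univ]

lemma sub_snd_univ (hn : σ.snd ≤ n) : (n - σ.snd) Set.univ = 1 - σ Set.univ := by
  rw [Measure.sub_apply .univ hn, measure_univ, Measure.snd_univ]

lemma completion_mem_Cpl (hm : σ.fst ≤ m) (hn : σ.snd ≤ n) : completion σ m n ∈ Cpl m n := by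
  constructor
  · rw [completion, Measure.map_add _ _ measurable_fst, Measure.map_smul, Measure.map_fst_prod,
      smul_smul, sub_snd_univ hn, ← sub_fst_univ hm, inv_mul_smul_self, add_comm]
    exact Measure.sub_add_cancel_of_le hm
  · rw [completion, Measure.map_add _ _ measurable_snd, Measure.map_smul, Measure.map_snd_prod,
      smul_smul, sub_fst_univ hm, ← sub_snd_univ hn, inv_mul_smul_self, add_comm]
    exact Measure.sub_add_cancel_of_le hn

lemma lintegral_completion_le (hm : σ.fst ≤ m) (hn : σ.snd ≤ n) {c : α × β → ℝ≥0∞}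
    {φ : α → ℝ≥0∞} (hφ : Measurable φ) {ψ : β → ℝ≥0∞} (hψ : Measurable ψ)
    (hc : ∀ z, c z ≤ φ z.1 + ψ z.2) :
    ∫⁻ z, c z ∂completion σ m n ≤
      ∫⁻ z, c z ∂σ + (∫⁻ x, φ x ∂(m - σ.fst) + ∫⁻ y, ψ y ∂(n - σ.snd)) := by
  rw [completion, lintegral_add_measure, lintegral_smul_measure]
  gcongr
  set t := 1 - σ Set.univ
  calc t⁻¹ * ∫⁻ z, c z ∂(m - σ.fst).prod (n - σ.snd)
      ≤ t⁻¹ * ∫⁻ z, (φ z.1 + ψ z.2) ∂(m - σ.fst).prod (n - σ.snd) := by gcongr; exact hc _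
    _ = t⁻¹ * t * (∫⁻ x, φ x ∂(m - σ.fst) + ∫⁻ y, ψ y ∂(n - σ.snd)) := by
      rw [lintegral_add_left (by fun_prop), ← lintegral_map hφ measurable_fst,
        ← lintegral_map hψ measurable_snd, Measure.map_fst_prod, Measure.map_snd_prod,
        sub_fst_univ hm, sub_snd_univ hn, lintegral_smul_measure, lintegral_smul_measure,
        smul_eq_mul, smul_eq_mul, ← mul_add, mul_assoc]
    _ ≤ ∫⁻ x, φ x ∂(m - σ.fst) + ∫⁻ y, ψ y ∂(n - σ.snd) :=
      mul_le_of_le_one_left' (ENNReal.inv_mul_le_one t)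

end Completion

section Discrete

variable [Countable α] [MeasurableSpace α] [MeasurableSingletonClass α]

lemma measure_le_iff_singleton {μ ν : Measure α} : μ ≤ ν ↔ ∀ x, μ {x} ≤ ν {x} := by
  refine ⟨fun h x => h {x}, fun h => Measure.le_iff.2 fun s _ => ?_⟩
  rw [← Measure.tsum_indicator_apply_singleton μ s (Set.to_countable s).measurableSet,
    ← Measure.tsum_indicator_apply_singleton ν s (Set.to_countable s).measurableSet]
  exact ENNReal.tsum_le_tsum fun x => Set.indicator_le_indicator (h x)

lemma measurable_measure_of_singleton {Ω : Type*} [MeasurableSpace Ω] {κ : Ω → Measure α}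
    (h : ∀ x, Measurable fun ω => κ ω {x}) : Measurable κ := by
  refine Measure.measurable_of_measurable_coe _ fun s hs => ?_
  have h_sum : (fun ω => κ ω s) = fun ω => ∑' x, s.indicator (fun x => κ ω {x}) x :=
    funext fun ω => (Measure.tsum_indicator_apply_singleton (κ ω) s hs).symm
  rw [h_sum]
  refine Measurable.tsum fun x => ?_
  by_cases hx : x ∈ s
  · simpa only [Set.indicator_of_mem hx] using h x
  · simpa only [Set.indicator_of_notMem hx] using measurable_const

lemma exists_rat_mul_le_le {r : ℝ≥0∞} (hr : r < 1) {t : ℝ≥0∞} (ht : t ≠ ∞) :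
    ∃ q : ℚ, r * t ≤ ENNReal.ofReal q ∧ ENNReal.ofReal q ≤ t := by
  rcases eq_or_ne t 0 with rfl | ht₀
  · exact ⟨0, by simp⟩
  have hrt : r * t < t := by
    simpa only [one_mul] using ENNReal.mul_lt_mul_left ht₀ ht hr
  obtain ⟨q, -, hq⟩ := ENNReal.lt_iff_exists_rat_btwn.1 hrt
  exact ⟨q, hq.1.le, hq.2.le⟩

lemma exists_seq_measure_approx_finset (α : Type*) [Countable α] [MeasurableSpace α]
    [MeasurableSingletonClass α] :
    ∃ σ : ℕ → Measure α, (∀ n, IsFiniteMeasure (σ n)) ∧ ∀ (π : Measure α) [IsFiniteMeasure π]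
      (Φ : α → ℝ≥0∞) (F : Finset α), ∀ r < 1,
        ∃ n, σ n ≤ π ∧ r * ∑ x ∈ F, Φ x * π {x} ≤ ∫⁻ x, Φ x ∂σ n := by
  classical
  obtain ⟨w, hw⟩ := exists_surjective_nat (α →₀ ℚ)
  let σ (n : ℕ) : Measure α := Measure.sum fun x => ENNReal.ofReal (w n x) • Measure.dirac x
  have lintegral_σ (n : ℕ) (Φ : α → ℝ≥0∞) :
      ∫⁻ x, Φ x ∂σ n = ∑' x, ENNReal.ofReal (w n x) * Φ x := by
    simp only [σ, lintegral_sum_measure, lintegral_smul_measure, lintegral_dirac, smul_eq_mul]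
  refine ⟨σ, fun n => ⟨?_⟩, fun π _ Φ F r hr => ?_⟩
  · rw [← lintegral_one, lintegral_σ, tsum_eq_sum (s := (w n).support)]
    · exact ENNReal.sum_lt_top.2 fun x _ => by simp
    · intro x hx
      simp [Finsupp.notMem_support_iff.1 hx]
  choose q hq_ge hq_le using fun x => exists_rat_mul_le_le hr (measure_ne_top π {x})
  obtain ⟨n, hn⟩ := hw (Finsupp.indicator F fun x _ => q x)
  refine ⟨n, measure_le_iff_singleton.2 fun x => ?_, ?_⟩
  · rw [Measure.sum_smul_dirac_singleton, hn, Finsupp.indicator_apply]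
    split_ifs
    · exact hq_le x
    · simp
  calc r * ∑ x ∈ F, Φ x * π {x} = ∑ x ∈ F, r * π {x} * Φ x := by
        rw [Finset.mul_sum]; exact Finset.sum_congr rfl fun x _ => by ring
    _ ≤ ∑ x ∈ F, ENNReal.ofReal (w n x) * Φ x := by
        refine Finset.sum_le_sum fun x hx => mul_le_mul_left ?_ _
        rw [hn, Finsupp.indicator_of_mem hx]
        exact hq_ge x
    _ ≤ ∫⁻ x, Φ x ∂σ n := by rw [lintegral_σ]; exact ENNReal.sum_le_tsum F

lemma exists_seq_measure_approx (α : Type*) [Countable α] [MeasurableSpace α]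
    [MeasurableSingletonClass α] :
    ∃ σ : ℕ → Measure α, (∀ n, IsFiniteMeasure (σ n)) ∧ ∀ (π : Measure α) [IsFiniteMeasure π]
      (Φ : α → ℝ≥0∞), ∫⁻ x, Φ x ∂π ≠ ∞ → ∀ ε ≠ 0,
        ∃ n, σ n ≤ π ∧ ∫⁻ x, Φ x ∂π ≤ ∫⁻ x, Φ x ∂σ n + ε := by
  obtain ⟨σ, hσ, hσ_approx⟩ := exists_seq_measure_approx_finset α
  refine ⟨σ, hσ, fun π _ Φ hΦ ε hε => ?_⟩
  by_contra! h
  have h_add_le (r : ℝ≥0∞) (hr : r < 1) : r * ∫⁻ x, Φ x ∂π + ε ≤ ∫⁻ x, Φ x ∂π := by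
    conv_lhs => rw [lintegral_countable', ENNReal.tsum_eq_iSup_sum, ENNReal.mul_iSup,
      ENNReal.iSup_add]
    refine iSup_le fun F => ?_
    obtain ⟨n, hn, hF⟩ := hσ_approx π Φ F r hr
    exact (add_le_add_left hF ε).trans (h n hn).le
  have hε_le : ε ≤ ∫⁻ x, Φ x ∂π := by simpa using h_add_le 0 one_pos
  have hε_top : ε ≠ ∞ := ne_top_of_le_ne_top hΦ hε_le
  refine (ENNReal.sub_lt_self hΦ ((pos_iff_ne_zero.2 hε).trans_le hε_le).ne' hε).not_ge ?_
  exact ENNReal.le_of_forall_lt_one_mul_le fun r hr =>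
    ENNReal.le_sub_of_add_le_right hε_top (h_add_le r hr)

end Discrete

section CompletionKernel

variable {Ω : Type*} [MeasurableSpace Ω]
  [Countable α] [MeasurableSpace α] [MeasurableSingletonClass α]
  [Countable β] [MeasurableSpace β] [MeasurableSingletonClass β]

lemma exists_kernel_completion (a : Kernel Ω α) [IsMarkovKernel a] (b : Kernel Ω β)
    [IsMarkovKernel b] (σ : Measure (α × β)) [IsFiniteMeasure σ] :
    ∃ K : Kernel Ω (α × β), (∀ ω, K ω ∈ Cpl (a ω) (b ω)) ∧
      ∀ ω, σ.fst ≤ a ω → σ.snd ≤ b ω → K ω = completion σ (a ω) (b ω) := by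
  classical
  let s : Set Ω := {ω | σ.fst ≤ a ω ∧ σ.snd ≤ b ω}
  let K (ω : Ω) : Measure (α × β) :=
    if ω ∈ s then completion σ (a ω) (b ω) else (a ω).prod (b ω)
  have hs : MeasurableSet s := by
    simp only [s, measure_le_iff_singleton, Set.ofPred_and, Set.ofPred_forall]
    exact .inter
      (.iInter fun x => measurableSet_le measurable_const (a.measurable_coe (.singleton x)))
      (.iInter fun y => measurableSet_le measurable_const (b.measurable_coe (.singleton y)))
  have K_singleton (x : α) (y : β) (ω : Ω) : K ω {(x, y)} = if ω ∈ s then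
      σ {(x, y)} + (1 - σ Set.univ)⁻¹ * ((a ω {x} - σ.fst {x}) * (b ω {y} - σ.snd {y}))
      else a ω {x} * b ω {y} := by
    simp only [K]
    split_ifs with h
    · rw [completion, ← Set.singleton_prod_singleton, Measure.add_apply, Measure.smul_apply,
        Measure.prod_prod, Measure.sub_apply (.singleton x) h.1,
        Measure.sub_apply (.singleton y) h.2, smul_eq_mul]
    · rw [← Set.singleton_prod_singleton, Measure.prod_prod]
  have hK : Measurable K := measurable_measure_of_singleton fun (x, y) => by
    have ha := a.measurable_coe (measurableSet_singleton x)
    have hb := b.measurable_coe (measurableSet_singleton y)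
    simp_rw [K_singleton]
    exact Measurable.ite hs (by fun_prop) (by fun_prop)
  refine ⟨⟨K, hK⟩, fun ω => ?_, fun ω h₁ h₂ => if_pos ⟨h₁, h₂⟩⟩
  by_cases h : ω ∈ s
  · simpa [K, h] using completion_mem_Cpl h.1 h.2
  · simp [K, h, Cpl]

lemma exists_seq_coupling_kernel (a : Kernel Ω α) [IsMarkovKernel a] (b : Kernel Ω β)
    [IsMarkovKernel b] :
    ∃ K : ℕ → Kernel Ω (α × β), (∀ n ω, K n ω ∈ Cpl (a ω) (b ω)) ∧
      ∀ ω, ∀ π ∈ Cpl (a ω) (b ω), ∀ (c : α × β → ℝ≥0∞) (φ : α → ℝ≥0∞) (ψ : β → ℝ≥0∞),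
        (∀ z, c z ≤ φ z.1 + ψ z.2) → ∫⁻ x, φ x ∂a ω ≠ ∞ → ∫⁻ y, ψ y ∂b ω ≠ ∞ →
        ⨅ n, ∫⁻ z, c z ∂K n ω ≤ ∫⁻ z, c z ∂π := by
  obtain ⟨σ, hσ, hσ_approx⟩ := exists_seq_measure_approx (α × β)
  choose K hK_Cpl hK using fun n => exists_kernel_completion a b (σ n)
  refine ⟨K, hK_Cpl, fun ω π ⟨hπ₁, hπ₂⟩ c φ ψ hc hφ hψ =>
    ENNReal.le_of_forall_pos_le_add fun ε hε _ => ?_⟩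
  have : IsFiniteMeasure (π.map Prod.fst) := hπ₁ ▸ inferInstance
  have : IsFiniteMeasure π := Measure.isFiniteMeasure_of_map measurable_fst.aemeasurable
  have lintegral_add (τ : Measure (α × β)) :
      ∫⁻ z, (φ z.1 + ψ z.2) ∂τ = ∫⁻ x, φ x ∂τ.fst + ∫⁻ y, ψ y ∂τ.snd := by
    rw [lintegral_add_left (measurable_of_countable _), Measure.fst, Measure.snd,
      lintegral_map (measurable_of_countable φ) measurable_fst,
      lintegral_map (measurable_of_countable ψ) measurable_snd]
  obtain ⟨n, hn, hnε⟩ := hσ_approx π (fun z => φ z.1 + ψ z.2)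
    (by rw [lintegral_add, Measure.fst, hπ₁, Measure.snd, hπ₂]; exact ENNReal.add_ne_top.2 ⟨hφ, hψ⟩)
    ε (by positivity)
  have hσ₁ : (σ n).fst ≤ a ω := hπ₁ ▸ Measure.map_mono hn measurable_fst
  have hσ₂ : (σ n).snd ≤ b ω := hπ₂ ▸ Measure.map_mono hn measurable_snd
  have h_remainder :
      ∫⁻ x, φ x ∂(a ω - (σ n).fst) + ∫⁻ y, ψ y ∂(b ω - (σ n).snd) ≤ ε := by
    refine (ENNReal.add_le_add_iff_right (a := ∫⁻ x, φ x ∂(σ n).fst + ∫⁻ y, ψ y ∂(σ n).snd) ?_).1 ?_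
    · exact ENNReal.add_ne_top.2 ⟨ne_top_of_le_ne_top hφ (lintegral_mono' hσ₁ le_rfl),
        ne_top_of_le_ne_top hψ (lintegral_mono' hσ₂ le_rfl)⟩
    · rw [add_add_add_comm, ← lintegral_add_measure, ← lintegral_add_measure,
        Measure.sub_add_cancel_of_le hσ₁, Measure.sub_add_cancel_of_le hσ₂, ← lintegral_add,
        add_comm (ε : ℝ≥0∞)]
      simpa only [lintegral_add, Measure.fst, Measure.snd, hπ₁, hπ₂] using hnε
  calc ⨅ n, ∫⁻ z, c z ∂K n ω ≤ ∫⁻ z, c z ∂completion (σ n) (a ω) (b ω) :=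
        iInf_le_of_le n (by rw [hK n ω hσ₁ hσ₂])
    _ ≤ ∫⁻ z, c z ∂σ n + ε := by
        grw [lintegral_completion_le hσ₁ hσ₂ (measurable_of_countable φ)
          (measurable_of_countable ψ) hc, h_remainder]
    _ ≤ ∫⁻ z, c z ∂π + ε := by grw [lintegral_mono' hn le_rfl]

end CompletionKernel

section Selection

lemma exists_kernel_lintegral_le_iInf_add {Ω E ι : Type*} [MeasurableSpace Ω] [MeasurableSpace E]
    [Countable ι] [Nonempty ι] (K : ι → Kernel Ω E) {c : E → ℝ≥0∞} (hc : Measurable c)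
    {ε : ℝ≥0∞} (hε : ε ≠ 0) :
    ∃ κ : Kernel Ω E, ∀ ω, (∃ i, κ ω = K i ω) ∧
      ∫⁻ z, c z ∂κ ω ≤ (⨅ i, ∫⁻ z, c z ∂K i ω) + ε := by
  classical
  obtain ⟨e, he⟩ := exists_surjective_nat ι
  have h_exists (ω : Ω) : ∃ n, ∫⁻ z, c z ∂K (e n) ω ≤ (⨅ i, ∫⁻ z, c z ∂K i ω) + ε := by
    rw [← he.exists (p := fun i => ∫⁻ z, c z ∂K i ω ≤ (⨅ i, ∫⁻ z, c z ∂K i ω) + ε)]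
    rcases eq_or_ne (⨅ i, ∫⁻ z, c z ∂K i ω) ∞ with h | h
    · simp [h]
    · obtain ⟨i, hi⟩ := exists_lt_of_ciInf_lt (ENNReal.lt_add_right h hε)
      exact ⟨i, hi.le⟩
  refine ⟨⟨fun ω => K (e (Nat.find (h_exists ω))) ω, Measurable.find (fun n => (K (e n)).measurable)
    (fun n => measurableSet_le ?_ ?_) h_exists⟩, fun ω => ⟨⟨_, rfl⟩, Nat.find_spec (h_exists ω)⟩⟩
  · exact hc.lintegral_kernel
  · exact (Measurable.iInf fun i => hc.lintegral_kernel).add_const ε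

end Selection

section CouplingLift

variable {γ δ Ω : Type*} [MeasurableSpace Ω]

lemma isProbabilityMeasure_of_mem_Cpl [MeasurableSpace α] [MeasurableSpace β] {m : Measure α}
    [IsProbabilityMeasure m] {n : Measure β} {π : Measure (α × β)} (hπ : π ∈ Cpl m n) :
    IsProbabilityMeasure π :=
  ⟨by rw [← Measure.fst_univ, Measure.fst, hπ.1, measure_univ]⟩

lemma exists_seq_coupling_kernel_comp [MeasurableSpace α] [StandardBorelSpace α] [Nonempty α]
    [MeasurableSpace β] [Countable γ] [MeasurableSpace γ] [MeasurableSingletonClass γ]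
    [Countable δ] [Nonempty δ] [MeasurableSpace δ] [MeasurableSingletonClass δ]
    (a : Kernel Ω α) [IsMarkovKernel a] (b : Kernel Ω β) [IsMarkovKernel b]
    {f : α → γ} (hf : Measurable f) {g : β → δ} (hg : Measurable g) :
    ∃ K : ℕ → Kernel Ω (α × β), (∀ n ω, K n ω ∈ Cpl (a ω) (b ω)) ∧
      ∀ ω, ∀ π ∈ Cpl (a ω) (b ω), ∀ (c : γ × δ → ℝ≥0∞) (φ : γ → ℝ≥0∞) (ψ : δ → ℝ≥0∞),
        (∀ z, c z ≤ φ z.1 + ψ z.2) → ∫⁻ x, φ (f x) ∂a ω ≠ ∞ → ∫⁻ y, ψ (g y) ∂b ω ≠ ∞ →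
        ⨅ n, ∫⁻ z, c (f z.1, g z.2) ∂K n ω ≤ ∫⁻ z, c (f z.1, g z.2) ∂π := by
  have : IsMarkovKernel (a.map f) := Kernel.IsMarkovKernel.map a hf
  have : IsMarkovKernel (b.map g) := Kernel.IsMarkovKernel.map b hg
  obtain ⟨K', hK'_Cpl, hK'⟩ := exists_seq_coupling_kernel (a.map f) (b.map g)
  have hK'_markov (n : ℕ) : IsMarkovKernel (K' n) :=
    ⟨fun ω => isProbabilityMeasure_of_mem_Cpl (hK'_Cpl n ω)⟩
  choose K hK_fst hK_snd hK using fun n => exists_coupling_kernel_lift a b hf hg (K' n)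
    (Kernel.ext fun ω => by rw [Kernel.fst_apply, (hK'_Cpl n ω).1])
    (Kernel.ext fun ω => by rw [Kernel.snd_apply, (hK'_Cpl n ω).2])
  refine ⟨K, fun n ω => ⟨?_, ?_⟩, fun ω π hπ c φ ψ hc hφ hψ => ?_⟩
  · rw [← Kernel.fst_apply, hK_fst]
  · rw [← Kernel.snd_apply, hK_snd]
  have hfg : Measurable (Prod.map f g) := hf.prodMap hg
  have hπ' : π.map (Prod.map f g) ∈ Cpl (a.map f ω) (b.map g ω) := by
    rw [Kernel.map_apply _ hf, Kernel.map_apply _ hg, ← hπ.1, ← hπ.2]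
    constructor <;> rw [Measure.map_map (by fun_prop) (by fun_prop),
      Measure.map_map (by fun_prop) (by fun_prop)] <;> rfl
  have h := hK' ω _ hπ' c φ ψ hc
    (by rwa [Kernel.map_apply _ hf, lintegral_map (measurable_of_countable φ) hf])
    (by rwa [Kernel.map_apply _ hg, lintegral_map (measurable_of_countable ψ) hg])
  simpa only [← hK, Kernel.map_apply _ hfg, lintegral_map (measurable_of_countable c) hfg,
    Prod.map_apply'] using h

end CouplingLift

section Minkowski

lemma iInf_rpow {ι : Sort*} {s : ℝ} (hs : 0 < s) (f : ι → ℝ≥0∞) :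
    (⨅ i, f i) ^ s = ⨅ i, f i ^ s :=
  (ENNReal.orderIsoRpow s hs).map_iInf f

variable [MeasurableSpace α] {p : ℝ} {μ : Measure α} [IsProbabilityMeasure μ]

lemma lintegral_rpow_le_add_const (hp : 1 ≤ p) {f g : α → ℝ≥0∞} (hg : AEMeasurable g μ)
    {C : ℝ≥0∞} (hfg : ∀ x, f x ≤ g x + C) :
    (∫⁻ x, f x ^ p ∂μ) ^ (1 / p) ≤ (∫⁻ x, g x ^ p ∂μ) ^ (1 / p) + C := by
  have hp₀ : 0 < p := one_pos.trans_le hp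
  calc (∫⁻ x, f x ^ p ∂μ) ^ (1 / p)
      ≤ (∫⁻ x, (g x + C) ^ p ∂μ) ^ (1 / p) := by gcongr with x; exact hfg x
    _ ≤ (∫⁻ x, g x ^ p ∂μ) ^ (1 / p) + (∫⁻ _, C ^ p ∂μ) ^ (1 / p) :=
        ENNReal.lintegral_Lp_add_le hg aemeasurable_const hp
    _ = (∫⁻ x, g x ^ p ∂μ) ^ (1 / p) + C := by
        rw [lintegral_const, measure_univ, mul_one, ← ENNReal.rpow_mul, mul_one_div_cancel hp₀.ne',
          ENNReal.rpow_one]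

lemma lintegral_rpow_ne_top_of_le_add_const (hp : 1 ≤ p) {f g : α → ℝ≥0∞} (hg : AEMeasurable g μ)
    {C : ℝ≥0∞} (hC : C ≠ ∞) (hfg : ∀ x, f x ≤ g x + C) (h : ∫⁻ x, g x ^ p ∂μ ≠ ∞) :
    ∫⁻ x, f x ^ p ∂μ ≠ ∞ := by
  have hp' : 0 < 1 / p := one_div_pos.2 (one_pos.trans_le hp)
  rw [Ne, ← ENNReal.rpow_eq_top_iff_of_pos hp'] at h ⊢
  exact ne_top_of_le_ne_top (ENNReal.add_ne_top.2 ⟨h, hC⟩) (lintegral_rpow_le_add_const hp hg hfg)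

end Minkowski

section Metric

lemma exists_measurable_nat_edist_le {B : Type*} [PseudoEMetricSpace B] [MeasurableSpace B]
    [OpensMeasurableSpace B] {r : ℕ → B} (hr : DenseRange r) {δ : ℝ≥0∞} (hδ : δ ≠ 0) :
    ∃ D : B → ℕ, Measurable D ∧ ∀ x, edist x (r (D x)) ≤ δ := by
  classical
  have h_exists (x : B) : ∃ n, edist x (r n) ≤ δ := by
    obtain ⟨_, ⟨n, rfl⟩, hn⟩ := EMetric.mem_closure_iff.1 (hr x) δ (pos_iff_ne_zero.2 hδ)
    exact ⟨n, hn.le⟩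
  exact ⟨fun x => Nat.find (h_exists x),
    measurable_find h_exists fun n => measurableSet_le (by fun_prop) measurable_const,
    fun x => Nat.find_spec (h_exists x)⟩

lemma edist_rpow_le {B : Type*} [PseudoEMetricSpace B] {p : ℝ} (hp : 1 ≤ p) (x₀ x y : B) :
    edist x y ^ p ≤ 2 ^ (p - 1) * edist x₀ x ^ p + 2 ^ (p - 1) * edist x₀ y ^ p := by
  rw [← mul_add]
  grw [← ENNReal.rpow_add_le_mul_rpow_add_rpow _ _ hp, edist_triangle_left x y x₀]

variable {Ω : Type*} [MeasurableSpace Ω] {B : Type*} [PseudoEMetricSpace B]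
  [SecondCountableTopology B] [MeasurableSpace B] [OpensMeasurableSpace B]
  [StandardBorelSpace B] [Nonempty B] {p : ℝ}

lemma exists_seq_coupling_kernel_le_Wp_add (hp : 1 ≤ p) (a : Kernel Ω B) [IsMarkovKernel a]
    (b : Kernel Ω B) [IsMarkovKernel b] {δ : ℝ≥0∞} (hδ : δ ≠ 0) (hδ_top : δ ≠ ∞) :
    ∃ K : ℕ → Kernel Ω (B × B), (∀ n ω, K n ω ∈ Cpl (a ω) (b ω)) ∧
      ∀ ω x₀, ∫⁻ x, edist x₀ x ^ p ∂a ω ≠ ∞ → ∫⁻ x, edist x₀ x ^ p ∂b ω ≠ ∞ →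
        (⨅ n, ∫⁻ z, edist z.1 z.2 ^ p ∂K n ω) ^ (1 / p) ≤
          Wp p edist (a ω) (b ω) + 4 * δ := by
  have hp' : 0 < 1 / p := one_div_pos.2 (one_pos.trans_le hp)
  let r : ℕ → B := TopologicalSpace.denseSeq B
  obtain ⟨D, hD, hDδ⟩ :=
    exists_measurable_nat_edist_le (TopologicalSpace.denseRange_denseSeq B) hδ
  have : Measurable (r ∘ D) := (measurable_of_countable r).comp hD
  obtain ⟨K, hK_Cpl, hK⟩ := exists_seq_coupling_kernel_comp a b hD hD
  refine ⟨K, hK_Cpl, fun ω x₀ ha hb => tsub_le_iff_right.1 (le_iInf₂ fun π hπ =>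
    tsub_le_iff_right.2 ?_)⟩
  have h_moment (m : Measure B) [IsProbabilityMeasure m] (hm : ∫⁻ x, edist x₀ x ^ p ∂m ≠ ∞) :
      ∫⁻ x, 2 ^ (p - 1) * edist x₀ (r (D x)) ^ p ∂m ≠ ∞ := by
    rw [lintegral_const_mul _ (by fun_prop)]
    exact ENNReal.mul_ne_top (by finiteness) <| lintegral_rpow_ne_top_of_le_add_const hp
      (by fun_prop) hδ_top (fun x => by grw [edist_triangle x₀ x, hDδ x]) hm
  have h_discrete : ⨅ n, ∫⁻ z, edist (r (D z.1)) (r (D z.2)) ^ p ∂K n ω ≤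
      ∫⁻ z, edist (r (D z.1)) (r (D z.2)) ^ p ∂π :=
    hK ω π hπ (fun z => edist (r z.1) (r z.2) ^ p) (fun i => 2 ^ (p - 1) * edist x₀ (r i) ^ p)
      (fun i => 2 ^ (p - 1) * edist x₀ (r i) ^ p) (fun z => edist_rpow_le hp x₀ _ _)
      (h_moment (a ω) ha) (h_moment (b ω) hb)
  have (n : ℕ) := isProbabilityMeasure_of_mem_Cpl (hK_Cpl n ω)
  have := isProbabilityMeasure_of_mem_Cpl hπ
  rw [iInf_rpow hp']
  calc ⨅ n, (∫⁻ z, edist z.1 z.2 ^ p ∂K n ω) ^ (1 / p)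
      ≤ ⨅ n, ((∫⁻ z, edist (r (D z.1)) (r (D z.2)) ^ p ∂K n ω) ^ (1 / p) + 2 * δ) :=
        iInf_mono fun n => lintegral_rpow_le_add_const hp (by fun_prop) fun z => by
          grw [edist_triangle4 z.1 (r (D z.1)) (r (D z.2)) z.2, hDδ, edist_comm _ z.2, hDδ]
          exact (by ring : _ = _).le
    _ = (⨅ n, ∫⁻ z, edist (r (D z.1)) (r (D z.2)) ^ p ∂K n ω) ^ (1 / p) + 2 * δ := by
        rw [← ENNReal.iInf_add, iInf_rpow hp']
    _ ≤ (∫⁻ z, edist (r (D z.1)) (r (D z.2)) ^ p ∂π) ^ (1 / p) + 2 * δ := by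
        gcongr
    _ ≤ (∫⁻ z, edist z.1 z.2 ^ p ∂π) ^ (1 / p) + 4 * δ := by
        rw [show (4 : ℝ≥0∞) = 2 + 2 by norm_num, add_mul, ← add_assoc]
        gcongr
        refine lintegral_rpow_le_add_const hp (by fun_prop) fun z => ?_
        grw [edist_triangle4 _ z.1 z.2 _, edist_comm _ z.1, hDδ, hDδ]
        exact (by ring : _ = _).le

lemma exists_coupling_kernel_le_Wp_add (hp : 1 ≤ p) (a : Kernel Ω B) [IsMarkovKernel a]
    (b : Kernel Ω B) [IsMarkovKernel b] {ε : ℝ≥0∞} (hε : ε ≠ 0) :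
    ∃ K : Kernel Ω (B × B), (∀ ω, K ω ∈ Cpl (a ω) (b ω)) ∧
      ∀ ω x₀, ∫⁻ x, edist x₀ x ^ p ∂a ω ≠ ∞ → ∫⁻ x, edist x₀ x ^ p ∂b ω ≠ ∞ →
        ∫⁻ z, edist z.1 z.2 ^ p ∂K ω ≤ Wp p edist (a ω) (b ω) ^ p + ε := by
  choose K hK_Cpl hK using fun l : ℕ => exists_seq_coupling_kernel_le_Wp_add hp a b
    (pow_ne_zero l (ENNReal.inv_ne_zero.2 (by simp)) : (2⁻¹ : ℝ≥0∞) ^ l ≠ 0) (by finiteness)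
  obtain ⟨κ, hκ⟩ := exists_kernel_lintegral_le_iInf_add (fun i : ℕ × ℕ => K i.1 i.2)
    (measurable_edist.pow_const p) hε
  refine ⟨κ, fun ω => ?_, fun ω x₀ ha hb => (hκ ω).2.trans (add_le_add_left ?_ ε)⟩
  · obtain ⟨⟨i, hi⟩, -⟩ := hκ ω
    exact hi ▸ hK_Cpl i.1 i.2 ω
  rw [← ENNReal.rpow_inv_le_iff (one_pos.trans_le hp), ← one_div]
  have h_tendsto : Tendsto (fun l : ℕ => Wp p edist (a ω) (b ω) + 4 * (2⁻¹ : ℝ≥0∞) ^ l) atTop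
      (𝓝 (Wp p edist (a ω) (b ω))) := by
    simpa using (ENNReal.Tendsto.const_mul (ENNReal.tendsto_pow_atTop_nhds_zero_of_lt_one
      (ENNReal.inv_lt_one.2 one_lt_two)) (.inr (by simp : (4 : ℝ≥0∞) ≠ ∞))).const_add _
  refine ge_of_tendsto' h_tendsto fun l => le_trans ?_ (hK l ω x₀ ha hb)
  gcongr
  exact le_iInf fun n => iInf_le _ (l, n)

end Metric

section Causality

lemma ae_eq_of_forall_ae_apply_eq {Ω B : Type*} [MeasurableSpace Ω] [MeasurableSpace B]
    [MeasurableSpace.CountablyGenerated B] {m : Measure Ω} {f g : Ω → Measure B}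
    [∀ ω, IsFiniteMeasure (f ω)] (h : ∀ E, MeasurableSet E → ∀ᵐ ω ∂m, f ω E = g ω E) :
    f =ᵐ[m] g := by
  let C := generateSetAlgebra (MeasurableSpace.countableGeneratingSet B)
  have hC_gen : ‹MeasurableSpace B› = MeasurableSpace.generateFrom C := by
    rw [generateFrom_generateSetAlgebra_eq, MeasurableSpace.generateFrom_countableGeneratingSet]
  have hC : IsSetAlgebra C := isSetAlgebra_generateSetAlgebra
  have hC_countable : C.Countable :=
    countable_generateSetAlgebra MeasurableSpace.countable_countableGeneratingSet
  have hC_ae : ∀ᵐ ω ∂m, ∀ E ∈ C, f ω E = g ω E :=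
    (ae_ball_iff hC_countable).2 fun E hE =>
      h E (hC_gen ▸ MeasurableSpace.measurableSet_generateFrom hE)
  filter_upwards [hC_ae] with ω hω
  exact ext_of_generate_finite C hC_gen (fun s hs t ht _ => hC.inter_mem hs ht) hω
    (hω _ hC.univ_mem)

lemma forall_condExp_preimage_ae_eq_iff {Ω β γ A : Type*} [MeasurableSpace Ω] [MeasurableSpace β]
    [MeasurableSpace γ] [MeasurableSpace A] [StandardBorelSpace A] [Nonempty A] {π : Measure Ω}
    [IsFiniteMeasure π] {X : Ω → β} (hX : Measurable X) {φ : β → γ} (hφ : Measurable φ) {Y : Ω → A}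
    (hY : Measurable Y) :
    (∀ S, MeasurableSet S → π⟦Y ⁻¹' S | MeasurableSpace.comap X inferInstance⟧ =ᵐ[π]
        π⟦Y ⁻¹' S | MeasurableSpace.comap (φ ∘ X) inferInstance⟧) ↔
      condDistrib Y X π =ᵐ[π.map X] (condDistrib Y (φ ∘ X) π).comap φ hφ := by
  have h_condExp (S : Set A) (hS : MeasurableSet S) :
      (π⟦Y ⁻¹' S | MeasurableSpace.comap X inferInstance⟧ =ᵐ[π]
        π⟦Y ⁻¹' S | MeasurableSpace.comap (φ ∘ X) inferInstance⟧) ↔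
      ∀ᵐ x ∂π.map X, condDistrib Y X π x S = (condDistrib Y (φ ∘ X) π).comap φ hφ x S := by
    rw [ae_map_iff hX.aemeasurable
      (measurableSet_eq_fun (Kernel.measurable_coe _ hS) (Kernel.measurable_coe _ hS))]
    exact ((condDistrib_ae_eq_condExp hX hY hS).congr_left.symm.trans
      (condDistrib_ae_eq_condExp (hφ.comp hX) hY hS).congr_right.symm).trans
      (eventually_congr (.of_forall fun z => measureReal_eq_measureReal_iff))
  rw [forall₂_congr h_condExp]
  refine ⟨fun h => ae_eq_of_forall_ae_apply_eq h, fun h S _ => ?_⟩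
  filter_upwards [h] with x hx
  rw [hx]

variable {A₁ B₁ A₂ B₂ : Type*} [MeasurableSpace A₁] [MeasurableSpace B₁] [MeasurableSpace A₂]
  [MeasurableSpace B₂] [StandardBorelSpace A₁] [StandardBorelSpace B₁] [Nonempty B₁]
  [StandardBorelSpace A₂] [Nonempty A₂] [StandardBorelSpace B₂]
  {π : Measure ((A₁ × B₁) × (A₂ × B₂))} [IsFiniteMeasure π]

lemma causal2_iff_condIndepFun :
    Causal2 π ↔ (fun z => z.1.2) ⟂ᵢ[fun z => z.1.1, (by fun_prop); π] (fun z => z.2.1) := by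
  rw [condIndepFun_iff_condDistrib_prod_ae_eq_prodMkRight (by fun_prop) (by fun_prop) (by fun_prop)]
  exact forall_condExp_preimage_ae_eq_iff measurable_fst measurable_fst (by fun_prop)

/-- Conditional independence is symmetric, so causality also says that `X₂` depends on
`(X₁, Y₁)` only through `X₁`. -/
lemma causal2_iff_map_eq_compProd :
    Causal2 π ↔ π.map (fun z => ((z.1.1, z.2.1), z.1.2)) =
      π.map (fun z => (z.1.1, z.2.1)) ⊗ₘ π.fst.condKernel.prodMkRight A₂ := by
  rw [causal2_iff_condIndepFun.trans ⟨.symm, .symm⟩,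
    condIndepFun_iff_condDistrib_prod_ae_eq_prodMkRight (by fun_prop) (by fun_prop) (by fun_prop),
    condDistrib_ae_eq_iff_measure_eq_compProd _ (by fun_prop)]
  simp only [condDistrib]
  rfl

end Causality

section Disintegration

lemma map_compProd_eq_map_compProd_comap {γ : Type*} [MeasurableSpace α] [MeasurableSpace β]
    [MeasurableSpace γ] {m : Measure α} [SFinite m] {f : α → β} (hf : Measurable f)
    (κ : Kernel β γ) [IsSFiniteKernel κ] :
    m.map f ⊗ₘ κ = (m ⊗ₘ κ.comap f hf).map (Prod.map f id) := by
  ext s hs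
  have hs' : MeasurableSet (Prod.map f id ⁻¹' s) := (hf.prodMap measurable_id) hs
  rw [Measure.map_apply (by fun_prop) hs, Measure.compProd_apply hs, Measure.compProd_apply hs',
    lintegral_map (Kernel.measurable_kernel_prodMk_left hs) hf]
  rfl

lemma IsCondBar.exists_kernel {A B : Type*} [MeasurableSpace A] [MeasurableSpace B]
    {γ : Measure ((A × Measure B) × (A × Measure B))}
    {η : (A × Measure B) × (A × Measure B) → Measure B} (hη : IsCondBar γ η) :
    ∃ a : Kernel (A × Measure B) B, IsMarkovKernel a ∧ η = fun z => a z.2 := by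
  obtain ⟨⟨g, hg, hηg⟩, hη_prob, -⟩ := hη
  have hg_prob (q) : IsProbabilityMeasure (g q) := hηg (q, q) ▸ hη_prob (q, q)
  exact ⟨⟨g, hg⟩, ⟨hg_prob⟩, funext hηg⟩

variable {A B : Type*} [MeasurableSpace A] [MeasurableSpace B] [StandardBorelSpace B] [Nonempty B]
  {μ ν : Measure (A × B)}

lemma disint_eq_map_fst [IsFiniteMeasure μ] :
    disint μ = μ.fst.map fun x => (x, μ.condKernel x) := by
  have : condK μ = μ.condKernel := by simp [condK, ‹IsFiniteMeasure μ›]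
  rw [disint, this, Measure.fst, Measure.map_map (by fun_prop) measurable_fst]
  rfl

lemma fst_disint [IsFiniteMeasure μ] : (disint μ).fst = μ.fst := by
  rw [disint_eq_map_fst, Measure.fst_map_prodMk (by fun_prop), Measure.map_id']

lemma ae_disint_snd_eq_condKernel [IsFiniteMeasure μ] :
    ∀ᵐ q ∂disint μ, q.2 = μ.condKernel q.1 := by
  suffices (fun q => μ.condKernel q.1) =ᵐ[disint μ] Prod.snd from this.symm
  refine ae_eq_of_forall_ae_apply_eq fun E hE => ?_
  have h_meas : MeasurableSet {q : A × Measure B | μ.condKernel q.1 E = q.2 E} :=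
    measurableSet_eq_fun ((Kernel.measurable_coe _ hE).comp measurable_fst)
      ((Measure.measurable_coe hE).comp measurable_snd)
  rw [disint_eq_map_fst]
  exact (ae_map_iff (by fun_prop) h_meas).2 (.of_forall fun _ => rfl)

/-- If `X̂₂` is a function of `X₁`, the barycenter condition says that the mixture of
`X̂₂` over the law of `Y⃗` disintegrates along `Y⃗`. -/
lemma isCondBar_iff_compProd_eq [IsFiniteMeasure μ]
    {γ : Measure ((A × Measure B) × (A × Measure B))} [IsFiniteMeasure γ]
    (hγ : γ.map Prod.fst = disint μ) (a : Kernel (A × Measure B) B) [IsMarkovKernel a] :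
    IsCondBar γ (fun z => a z.2) ↔ γ.snd ⊗ₘ a =
      (γ ⊗ₘ μ.condKernel.comap (fun z => z.1.1) (by fun_prop)).map (Prod.map Prod.snd id) := by
  have h_ae : ∀ᵐ z ∂γ, z.1.2 = μ.condKernel z.1.1 :=
    ae_of_ae_map measurable_fst.aemeasurable (hγ ▸ ae_disint_snd_eq_condKernel)
  have h_left {S : Set (A × Measure B)} (hS : MeasurableSet S) {E : Set B} (hE : MeasurableSet E) :
      (γ.snd ⊗ₘ a) (S ×ˢ E) = ∫⁻ z in Prod.snd ⁻¹' S, a z.2 E ∂γ := by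
    rw [Measure.compProd_apply_prod hS hE, Measure.snd,
      setLIntegral_map hS (Kernel.measurable_coe _ hE) measurable_snd]
  have h_right {S : Set (A × Measure B)} (hS : MeasurableSet S) {E : Set B}
      (hE : MeasurableSet E) :
      (γ ⊗ₘ μ.condKernel.comap (fun z => z.1.1) (by fun_prop)).map (Prod.map Prod.snd id) (S ×ˢ E) =
        ∫⁻ z in Prod.snd ⁻¹' S, z.1.2 E ∂γ := by
    rw [Measure.map_apply (by fun_prop) (hS.prod hE), Set.preimage_prod_map_prod,
      Set.preimage_id, Measure.compProd_apply_prod (measurable_snd hS) hE]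
    refine lintegral_congr_ae (ae_restrict_of_ae ?_)
    filter_upwards [h_ae] with z hz
    rw [hz]
    rfl
  refine ⟨fun ⟨_, _, h⟩ => Measure.ext_prod fun hS hE => ?_, fun h =>
    ⟨⟨a, a.measurable, fun _ => rfl⟩, fun _ => inferInstance, fun S hS E hE => ?_⟩⟩
  · rw [h_left hS hE, h_right hS hE]
    exact h _ hS _ hE
  · exact (h_left hS hE).symm.trans (h ▸ h_right hS hE)

end Disintegration

section Projection

lemma Wp_rpow_le_lintegral [MeasurableSpace α] {p : ℝ} (hp : 0 < p) {d : α → α → ℝ≥0∞}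
    {m n : Measure α} {π : Measure (α × α)} (hπ : π ∈ Cpl m n) :
    Wp p d m n ^ p ≤ ∫⁻ z, d z.1 z.2 ^ p ∂π := by
  rw [← ENNReal.le_rpow_inv_iff hp, ← one_div]
  exact iInf₂_le π hπ

lemma ae_condDistrib_prodMk_mem_Cpl {Ω γ : Type*} [MeasurableSpace Ω] [MeasurableSpace γ]
    [MeasurableSpace α] [StandardBorelSpace α] [Nonempty α]
    [MeasurableSpace β] [StandardBorelSpace β] [Nonempty β] {P : Measure Ω} [IsFiniteMeasure P]
    {U : Ω → α} (hU : Measurable U) {V : Ω → β} (hV : Measurable V) (Y : Ω → γ) :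
    ∀ᵐ y ∂P.map Y, condDistrib (fun ω => (U ω, V ω)) Y P y ∈
      Cpl (condDistrib U Y P y) (condDistrib V Y P y) := by
  filter_upwards [condDistrib_comp Y (hU.prodMk hV).aemeasurable measurable_fst,
    condDistrib_comp Y (hU.prodMk hV).aemeasurable measurable_snd] with y hy₁ hy₂
  rw [Kernel.map_apply _ (by fun_prop)] at hy₁ hy₂
  exact ⟨hy₁.symm, hy₂.symm⟩

variable {A B : Type*} [MeasurableSpace A] [MeasurableSpace B] [StandardBorelSpace B] [Nonempty B]
  {π : Measure ((A × B) × (A × B))} [IsFiniteMeasure π]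

lemma map_condKernel_mem_Cpl_disint :
    π.map (fun z => ((z.1.1, π.fst.condKernel z.1.1), (z.2.1, π.snd.condKernel z.2.1))) ∈
      Cpl (disint π.fst) (disint π.snd) := by
  have h_fst : π.fst.fst = π.map fun z => z.1.1 := Measure.map_map (by fun_prop) (by fun_prop)
  have h_snd : π.snd.fst = π.map fun z => z.2.1 := Measure.map_map (by fun_prop) (by fun_prop)
  constructor
  · rw [disint_eq_map_fst, h_fst, Measure.map_map (by fun_prop) (by fun_prop),
      Measure.map_map (by fun_prop) (by fun_prop)]
    rfl
  · rw [disint_eq_map_fst, h_snd, Measure.map_map (by fun_prop) (by fun_prop),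
      Measure.map_map (by fun_prop) (by fun_prop)]
    rfl

lemma Causal2.isCondBar [StandardBorelSpace A] [Nonempty A] (h : Causal2 π) :
    IsCondBar
      (π.map fun z => ((z.1.1, π.fst.condKernel z.1.1), (z.2.1, π.snd.condKernel z.2.1)))
      (fun z => condDistrib (fun z => z.1.2) (fun z => z.2.1) π z.2.1) := by
  let a : Kernel (A × Measure B) B :=
    (condDistrib (fun z => z.1.2) (fun z => z.2.1) π).comap Prod.fst measurable_fst
  let g : A → A × Measure B := fun y => (y, π.snd.condKernel y)
  let Φ : A × A → (A × Measure B) × (A × Measure B) :=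
    fun q => ((q.1, π.fst.condKernel q.1), (q.2, π.snd.condKernel q.2))
  have hg : Measurable g := by fun_prop
  have hΦ : Measurable Φ := by fun_prop
  let γ := π.map fun z => Φ (z.1.1, z.2.1)
  have hγ_snd : γ.snd = (π.map fun z => z.2.1).map g := by
    rw [Measure.snd, Measure.map_map (by fun_prop) (by fun_prop),
      Measure.map_map (by fun_prop) (by fun_prop)]
    rfl
  have hγ : γ = (π.map fun z => (z.1.1, z.2.1)).map Φ := by
    rw [Measure.map_map (by fun_prop) (by fun_prop)]
    rfl
  have h_left : γ.snd ⊗ₘ a = π.map fun z => (g z.2.1, z.1.2) := by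
    have ha : a.comap g hg = condDistrib (fun z => z.1.2) (fun z => z.2.1) π := rfl
    rw [hγ_snd, map_compProd_eq_map_compProd_comap hg, ha, compProd_map_condDistrib (by fun_prop),
      Measure.map_map (by fun_prop) (by fun_prop)]
    rfl
  refine (isCondBar_iff_compProd_eq map_condKernel_mem_Cpl_disint.1 a).2 ?_
  change γ.snd ⊗ₘ a = (γ ⊗ₘ _).map _
  have hκ : (π.fst.condKernel.comap (fun z : (A × Measure B) × (A × Measure B) => z.1.1)
      (by fun_prop)).comap Φ hΦ = π.fst.condKernel.prodMkRight A := rfl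
  rw [h_left, hγ, map_compProd_eq_map_compProd_comap hΦ, hκ, ← causal2_iff_map_eq_compProd.1 h,
    Measure.map_map (by fun_prop) (by fun_prop), Measure.map_map (by fun_prop) (by fun_prop)]
  rfl

lemma CWbar_disint_le_CW2 [StandardBorelSpace A] [Nonempty A] {μ ν : Measure (A × B)}
    [IsFiniteMeasure μ] {p : ℝ} (hp : 0 < p) (dA : A → A → ℝ≥0∞) {dB : B → B → ℝ≥0∞}
    (hdB : Measurable fun z : B × B => dB z.1 z.2) :
    CWbar p dA dB (disint μ) (disint ν) ≤ CW2 p dA dB μ ν := by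
  refine le_iInf₂ fun π ⟨⟨hπμ, hπν⟩, h⟩ => ?_
  subst hπμ hπν
  have : IsFiniteMeasure π := Measure.isFiniteMeasure_of_map (measurable_fst.aemeasurable)
  refine (iInf₂_le_of_le _ map_condKernel_mem_Cpl_disint <|
    iInf₂_le _ h.isCondBar).trans (ENNReal.rpow_le_rpow ?_ (by positivity))
  let σ := condDistrib (fun z => (z.1.2, z.2.2)) (fun z => z.2.1) π
  have h_cond : π.snd.condKernel = condDistrib (fun z => z.2.2) (fun z => z.2.1) π := by
    rw [condDistrib]
    rfl
  have hσ : ∀ᵐ y ∂π.map (fun z => z.2.1), σ y ∈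
      Cpl (condDistrib (fun z => z.1.2) (fun z => z.2.1) π y) (π.snd.condKernel y) :=
    h_cond ▸ ae_condDistrib_prodMk_mem_Cpl (by fun_prop) (by fun_prop) _
  have h_Wp : ∀ᵐ z ∂π, Wp p dB (condDistrib (fun z => z.1.2) (fun z => z.2.1) π z.2.1)
      (π.snd.condKernel z.2.1) ^ p ≤ ∫⁻ w, dB w.1 w.2 ^ p ∂σ z.2.1 := by
    filter_upwards [ae_of_ae_map (by fun_prop) hσ] with z hz
    exact Wp_rpow_le_lintegral hp hz
  have h_mean : ∫⁻ z, ∫⁻ w, dB w.1 w.2 ^ p ∂σ z.2.1 ∂π = ∫⁻ z, dB z.1.2 z.2.2 ^ p ∂π := by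
    rw [← lintegral_map (f := fun y => ∫⁻ w, dB w.1 w.2 ^ p ∂σ y)
      (hdB.pow_const p).lintegral_kernel (by fun_prop),
      ← Measure.lintegral_bind (by fun_prop) (by fun_prop),
      condDistrib_comp_map (by fun_prop) (by fun_prop), lintegral_map (by fun_prop) (by fun_prop)]
  grw [lintegral_map_le]
  calc ∫⁻ z, dA z.1.1 z.2.1 ^ p + Wp p dB (condDistrib (fun z => z.1.2) (fun z => z.2.1) π z.2.1)
        (π.snd.condKernel z.2.1) ^ p ∂π
      ≤ ∫⁻ z, dA z.1.1 z.2.1 ^ p + ∫⁻ w, dB w.1 w.2 ^ p ∂σ z.2.1 ∂π :=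
        lintegral_mono_ae (h_Wp.mono fun z hz => by gcongr)
    _ = ∫⁻ z, dA z.1.1 z.2.1 ^ p + dB z.1.2 z.2.2 ^ p ∂π := by
        rw [lintegral_add_right _ (by fun_prop), h_mean, lintegral_add_right _ (by fun_prop)]

end Projection

section Lifting

variable {A B : Type*} [MeasurableSpace A] [MeasurableSpace B] [StandardBorelSpace B] [Nonempty B]
  {μ ν : Measure (A × B)} [IsFiniteMeasure μ]
  {γ : Measure ((A × Measure B) × (A × Measure B))} [IsFiniteMeasure γ]
  {K : Kernel (A × Measure B) (B × B)} [IsMarkovKernel K]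

lemma map_compProd_condKernel_comap {Ω : Type*} [MeasurableSpace Ω] {m : Measure Ω} [SFinite m]
    {f : Ω → A} (hf : Measurable f) (h : m.map f = μ.fst) :
    (m ⊗ₘ μ.condKernel.comap f hf).map (Prod.map f id) = μ := by
  rw [← map_compProd_eq_map_compProd_comap, h, μ.disintegrate]

lemma condKernel_comap_comp {Ω : Type*} [MeasurableSpace Ω] {m : Measure Ω} [SFinite m]
    {f : Ω → A} (hf : Measurable f) (h : m.map f = μ.fst) :
    μ.condKernel.comap f hf ∘ₘ m = μ.snd := by
  rw [← Measure.snd_compProd, Measure.snd, Measure.snd]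
  conv_rhs => rw [← map_compProd_condKernel_comap hf h]
  rw [Measure.map_map (by fun_prop) (by fun_prop)]
  rfl

lemma IsCondBar.comp_snd_eq (hγ : γ.map Prod.fst = disint μ) {a : Kernel (A × Measure B) B}
    [IsMarkovKernel a] (ha : IsCondBar γ fun z => a z.2) : a ∘ₘ γ.snd = μ.snd := by
  have h_fst : γ.map (fun z => z.1.1) = μ.fst := by
    rw [← fst_disint, ← hγ, Measure.fst, Measure.map_map (by fun_prop) (by fun_prop)]
    rfl
  rw [← Measure.snd_compProd, (isCondBar_iff_compProd_eq hγ a).1 ha,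
    ← condKernel_comap_comp (by fun_prop) h_fst, ← Measure.snd_compProd, Measure.snd, Measure.snd,
    Measure.map_map (by fun_prop) (by fun_prop)]
  rfl

lemma IsCondBar.exists_gluing (hγ : γ.map Prod.fst = disint μ)
    (hK : IsCondBar γ fun z => K.fst z.2) :
    ∃ π : Measure ((A × B) × (A × B)),
      π.map (fun z => ((z.1.1, z.2.1), z.1.2)) =
        γ.map (fun z => (z.1.1, z.2.1)) ⊗ₘ μ.condKernel.prodMkRight A ∧
      π.map (fun z => (z.2.1, (z.1.2, z.2.2))) = (γ.snd ⊗ₘ K).map (Prod.map Prod.fst id) := by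
  let κ := μ.condKernel.comap (fun z : (A × Measure B) × (A × Measure B) => z.1.1) (by fun_prop)
  let τ := (γ.snd ⊗ₘ K).map MeasurableEquiv.prodAssoc.symm
  have hτ : (γ ⊗ₘ κ).map (Prod.map Prod.snd id) = τ.fst := by
    rw [← (isCondBar_iff_compProd_eq hγ K.fst).1 hK, Kernel.fst_eq,
      Measure.compProd_map measurable_fst, Measure.fst, Measure.map_map (by fun_prop) (by fun_prop)]
    rfl
  obtain ⟨θ, hθ₁, hθ₂⟩ := exists_measure_glue (γ ⊗ₘ κ) τ (by fun_prop) hτ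
  refine ⟨θ.map fun w => ((w.1.1.1.1, w.1.2), (w.1.1.2.1, w.2)), ?_, ?_⟩
  · have hκ : (μ.condKernel.prodMkRight A).comap (fun z => (z.1.1, z.2.1)) (by fun_prop) = κ := rfl
    rw [map_compProd_eq_map_compProd_comap (by fun_prop), hκ, ← hθ₁, Measure.fst,
      Measure.map_map (by fun_prop) (by fun_prop), Measure.map_map (by fun_prop) (by fun_prop)]
    rfl
  · have hτ' : γ.snd ⊗ₘ K = τ.map MeasurableEquiv.prodAssoc := by
      rw [Measure.map_map (by fun_prop) (by fun_prop)]
      simp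
    rw [hτ', ← hθ₂, Measure.map_map (by fun_prop) (by fun_prop),
      Measure.map_map (by fun_prop) (by fun_prop), Measure.map_map (by fun_prop) (by fun_prop)]
    rfl

lemma IsCondBar.exists_coupling [IsFiniteMeasure ν] (hγ : γ ∈ Cpl (disint μ) (disint ν))
    (hK : IsCondBar γ fun z => K.fst z.2)
    (hKν : K.snd = ν.condKernel.comap Prod.fst measurable_fst) :
    ∃ π ∈ Cpl μ ν,
      π.map (fun z => ((z.1.1, z.2.1), z.1.2)) =
        γ.map (fun z => (z.1.1, z.2.1)) ⊗ₘ μ.condKernel.prodMkRight A ∧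
      π.map (fun z => (z.1.2, z.2.2)) = K ∘ₘ γ.snd := by
  obtain ⟨π, hπX, hπY⟩ := hK.exists_gluing hγ.1
  have hπ₂ : π.map (fun z => (z.1.2, z.2.2)) = K ∘ₘ γ.snd := by
    calc π.map (fun z => (z.1.2, z.2.2))
        = (π.map fun z => (z.2.1, (z.1.2, z.2.2))).map Prod.snd := by
          rw [Measure.map_map (by fun_prop) (by fun_prop)]
          rfl
      _ = (γ.snd ⊗ₘ K).snd := by
          rw [hπY, Measure.map_map (by fun_prop) (by fun_prop)]
          rfl
      _ = K ∘ₘ γ.snd := Measure.snd_compProd _ _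
  have hμ : π.map Prod.fst = μ := by
    have hγμ : (γ.map fun z => (z.1.1, z.2.1)).map Prod.fst = μ.fst := by
      rw [← fst_disint, ← hγ.1, Measure.fst, Measure.map_map (by fun_prop) (by fun_prop),
        Measure.map_map (by fun_prop) (by fun_prop)]
      rfl
    calc π.map Prod.fst
        = (π.map fun z => ((z.1.1, z.2.1), z.1.2)).map (Prod.map Prod.fst id) := by
          rw [Measure.map_map (by fun_prop) (by fun_prop)]
          rfl
      _ = μ := hπX ▸ map_compProd_condKernel_comap measurable_fst hγμ
  have hν : π.map Prod.snd = ν := by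
    have hγν : γ.snd.map Prod.fst = ν.fst := by rw [← fst_disint, ← hγ.2, Measure.fst, Measure.snd]
    calc π.map Prod.snd
        = (π.map fun z => (z.2.1, (z.1.2, z.2.2))).map (Prod.map id Prod.snd) := by
          rw [Measure.map_map (by fun_prop) (by fun_prop)]
          rfl
      _ = (γ.snd ⊗ₘ K.snd).map (Prod.map Prod.fst id) := by
          rw [hπY, Kernel.snd_eq, Measure.compProd_map (by fun_prop),
            Measure.map_map (by fun_prop) (by fun_prop),
            Measure.map_map (by fun_prop) (by fun_prop)]
          rfl
      _ = ν := hKν ▸ map_compProd_condKernel_comap measurable_fst hγν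
  exact ⟨π, ⟨hμ, hν⟩, hπX, hπ₂⟩

lemma IsCondBar.exists_causal_coupling [StandardBorelSpace A] [Nonempty A] [IsFiniteMeasure ν]
    (hγ : γ ∈ Cpl (disint μ) (disint ν)) (hK : IsCondBar γ fun z => K.fst z.2)
    (hKν : K.snd = ν.condKernel.comap Prod.fst measurable_fst) :
    ∃ π ∈ Cpl μ ν, Causal2 π ∧
      π.map (fun z => (z.1.1, z.2.1)) = γ.map (fun z => (z.1.1, z.2.1)) ∧
      π.map (fun z => (z.1.2, z.2.2)) = K ∘ₘ γ.snd := by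
  obtain ⟨π, hπ, hπX, hπY⟩ := hK.exists_coupling hγ hKν
  have hπ₁ : π.map (fun z => (z.1.1, z.2.1)) = γ.map (fun z => (z.1.1, z.2.1)) := by
    rw [← Measure.fst_compProd (γ.map _) (μ.condKernel.prodMkRight A), ← hπX, Measure.fst,
      Measure.map_map (by fun_prop) (by fun_prop)]
    rfl
  have : IsFiniteMeasure π := by
    have : IsFiniteMeasure (π.map Prod.fst) := hπ.1 ▸ inferInstance
    exact Measure.isFiniteMeasure_of_map measurable_fst.aemeasurable
  refine ⟨π, hπ, ?_, hπ₁, hπY⟩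
  rw [causal2_iff_map_eq_compProd, hπX, hπ₁]
  simp only [Measure.fst, hπ.1]

lemma IsCondBar.CW2_rpow_le_lintegral [StandardBorelSpace A] [Nonempty A] [IsFiniteMeasure ν]
    {p : ℝ} (hp : 0 < p) {dA : A → A → ℝ≥0∞} (hdA : Measurable fun z : A × A => dA z.1 z.2)
    {dB : B → B → ℝ≥0∞} (hdB : Measurable fun z : B × B => dB z.1 z.2)
    (hγ : γ ∈ Cpl (disint μ) (disint ν)) (hK : IsCondBar γ fun z => K.fst z.2)
    (hKν : K.snd = ν.condKernel.comap Prod.fst measurable_fst) :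
    CW2 p dA dB μ ν ^ p ≤ ∫⁻ z, dA z.1.1 z.2.1 ^ p + ∫⁻ w, dB w.1 w.2 ^ p ∂K z.2 ∂γ := by
  obtain ⟨π, hπ, hπ_causal, hπ_fst, hπ_snd⟩ := hK.exists_causal_coupling hγ hKν
  have hdA_pow := hdA.pow_const p
  have hdB_pow := hdB.pow_const p
  have h_dA : ∫⁻ z, dA z.1.1 z.2.1 ^ p ∂π = ∫⁻ z, dA z.1.1 z.2.1 ^ p ∂γ := by
    rw [← lintegral_map (g := fun z : (A × B) × (A × B) => (z.1.1, z.2.1)) hdA_pow (by fun_prop),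
      hπ_fst, lintegral_map hdA_pow (by fun_prop)]
  have h_dB : ∫⁻ z, dB z.1.2 z.2.2 ^ p ∂π = ∫⁻ z, ∫⁻ w, dB w.1 w.2 ^ p ∂K z.2 ∂γ := by
    rw [← lintegral_map (g := fun z : (A × B) × (A × B) => (z.1.2, z.2.2)) hdB_pow (by fun_prop),
      hπ_snd, Measure.lintegral_bind (by fun_prop) (by fun_prop), Measure.snd,
      lintegral_map hdB_pow.lintegral_kernel measurable_snd]
  calc CW2 p dA dB μ ν ^ p
      ≤ ∫⁻ z, dA z.1.1 z.2.1 ^ p + dB z.1.2 z.2.2 ^ p ∂π := by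
        rw [← ENNReal.le_rpow_inv_iff hp, ← one_div]
        exact iInf₂_le π ⟨hπ, hπ_causal⟩
    _ = ∫⁻ z, dA z.1.1 z.2.1 ^ p + ∫⁻ w, dB w.1 w.2 ^ p ∂K z.2 ∂γ := by
        rw [lintegral_add_left (by fun_prop), lintegral_add_left (by fun_prop), h_dA, h_dB]

end Lifting

section Comparison

lemma ae_lintegral_ne_top_of_comp {Ω γ : Type*} [MeasurableSpace Ω] [MeasurableSpace γ]
    {m : Measure Ω} {κ : Kernel Ω γ} {f : γ → ℝ≥0∞} (hf : Measurable f)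
    (h : ∫⁻ x, f x ∂(κ ∘ₘ m) ≠ ∞) : ∀ᵐ ω ∂m, ∫⁻ x, f x ∂κ ω ≠ ∞ := by
  rw [Measure.lintegral_bind (by fun_prop) (by fun_prop)] at h
  exact (ae_lt_top hf.lintegral_kernel h).mono fun _ => LT.lt.ne

lemma exists_coupling_kernel_ae_le_Wp_add {Ω B : Type*} [MeasurableSpace Ω] [PseudoEMetricSpace B]
    [SecondCountableTopology B] [MeasurableSpace B] [OpensMeasurableSpace B] [StandardBorelSpace B]
    [Nonempty B] {p : ℝ} (hp : 1 ≤ p) (m : Measure Ω) (a : Kernel Ω B) [IsMarkovKernel a]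
    (b : Kernel Ω B) [IsMarkovKernel b] {x₀ : B} (ha : ∫⁻ x, edist x₀ x ^ p ∂(a ∘ₘ m) ≠ ∞)
    (hb : ∫⁻ x, edist x₀ x ^ p ∂(b ∘ₘ m) ≠ ∞) {ε : ℝ≥0∞} (hε : ε ≠ 0) :
    ∃ K : Kernel Ω (B × B), (∀ ω, K ω ∈ Cpl (a ω) (b ω)) ∧
      ∀ᵐ ω ∂m, ∫⁻ z, edist z.1 z.2 ^ p ∂K ω ≤ Wp p edist (a ω) (b ω) ^ p + ε := by
  obtain ⟨K, hK_Cpl, hK⟩ := exists_coupling_kernel_le_Wp_add hp a b hε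
  refine ⟨K, hK_Cpl, ?_⟩
  filter_upwards [ae_lintegral_ne_top_of_comp (by fun_prop) ha,
    ae_lintegral_ne_top_of_comp (by fun_prop) hb] with ω using hK ω x₀

variable {A B : Type*} [MeasurableSpace A] [StandardBorelSpace A] [Nonempty A]
  [PseudoEMetricSpace B] [SecondCountableTopology B] [MeasurableSpace B] [OpensMeasurableSpace B]
  [StandardBorelSpace B] [Nonempty B] {μ ν : Measure (A × B)} [IsProbabilityMeasure μ]
  [IsProbabilityMeasure ν] {p : ℝ} {dA : A → A → ℝ≥0∞} {x₀ : B}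

lemma IsCondBar.CW2_rpow_le_add (hp : 1 ≤ p) (hdA : Measurable fun z : A × A => dA z.1 z.2)
    (hμ : ∫⁻ z, edist x₀ z.2 ^ p ∂μ ≠ ∞) (hν : ∫⁻ z, edist x₀ z.2 ^ p ∂ν ≠ ∞)
    {γ : Measure ((A × Measure B) × (A × Measure B))} [IsProbabilityMeasure γ]
    (hγ : γ ∈ Cpl (disint μ) (disint ν)) {a : Kernel (A × Measure B) B} [IsMarkovKernel a]
    (ha : IsCondBar γ fun z => a z.2) {ε : ℝ≥0∞} (hε : ε ≠ 0) :
    CW2 p dA edist μ ν ^ p ≤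
      ∫⁻ z, dA z.1.1 z.2.1 ^ p + Wp p edist (a z.2) z.2.2 ^ p ∂γ + ε := by
  have hγ_fst : γ.snd.map Prod.fst = ν.fst := by rw [← fst_disint, ← hγ.2, Measure.fst, Measure.snd]
  let b : Kernel (A × Measure B) B := ν.condKernel.comap Prod.fst measurable_fst
  have h_edist : Measurable fun x => edist x₀ x ^ p := by fun_prop
  obtain ⟨K, hK_Cpl, hK⟩ := exists_coupling_kernel_ae_le_Wp_add hp γ.snd a b (x₀ := x₀)
    (by rwa [ha.comp_snd_eq hγ.1, Measure.snd, lintegral_map h_edist measurable_snd])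
    (by rwa [condKernel_comap_comp measurable_fst hγ_fst, Measure.snd,
      lintegral_map h_edist measurable_snd]) hε
  have : IsMarkovKernel K := ⟨fun q => isProbabilityMeasure_of_mem_Cpl (hK_Cpl q)⟩
  have hK_fst : K.fst = a := Kernel.ext fun q => (K.fst_apply q).trans (hK_Cpl q).1
  have hK_snd : K.snd = b := Kernel.ext fun q => (K.snd_apply q).trans (hK_Cpl q).2
  have h_disint : ∀ᵐ q ∂γ.snd, q.2 = ν.condKernel q.1 := by
    rw [Measure.snd, hγ.2]
    exact ae_disint_snd_eq_condKernel
  have h_le : ∀ᵐ q ∂γ.snd, ∫⁻ w, edist w.1 w.2 ^ p ∂K q ≤ Wp p edist (a q) q.2 ^ p + ε := by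
    filter_upwards [hK, h_disint] with q hq hq_eq
    rwa [hq_eq]
  calc CW2 p dA edist μ ν ^ p
      ≤ ∫⁻ z, dA z.1.1 z.2.1 ^ p + ∫⁻ w, edist w.1 w.2 ^ p ∂K z.2 ∂γ :=
        CW2_rpow_le_lintegral (one_pos.trans_le hp) hdA measurable_edist hγ (hK_fst ▸ ha) hK_snd
    _ ≤ ∫⁻ z, (dA z.1.1 z.2.1 ^ p + Wp p edist (a z.2) z.2.2 ^ p) + ε ∂γ := by
        refine lintegral_mono_ae ?_
        filter_upwards [ae_of_ae_map measurable_snd.aemeasurable h_le] with z hz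
        grw [hz, add_assoc]
    _ = ∫⁻ z, dA z.1.1 z.2.1 ^ p + Wp p edist (a z.2) z.2.2 ^ p ∂γ + ε := by
        rw [lintegral_add_right _ measurable_const, lintegral_const, measure_univ, mul_one]

lemma CW2_le_CWbar_disint (hp : 1 ≤ p) (hdA : Measurable fun z : A × A => dA z.1 z.2)
    (hμ : ∫⁻ z, edist x₀ z.2 ^ p ∂μ ≠ ∞) (hν : ∫⁻ z, edist x₀ z.2 ^ p ∂ν ≠ ∞) :
    CW2 p dA edist μ ν ≤ CWbar p dA edist (disint μ) (disint ν) := by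
  refine le_iInf₂ fun γ hγ => le_iInf₂ fun η hη => ?_
  have : IsProbabilityMeasure (disint μ) := by
    rw [disint_eq_map_fst]
    exact Measure.isProbabilityMeasure_map (by fun_prop)
  have := isProbabilityMeasure_of_mem_Cpl hγ
  obtain ⟨a, _, rfl⟩ := IsCondBar.exists_kernel hη
  rw [one_div, ENNReal.le_rpow_inv_iff (one_pos.trans_le hp)]
  exact ENNReal.le_of_forall_pos_le_add fun ε hε _ =>
    IsCondBar.CW2_rpow_le_add hp hdA hμ hν hγ hη (by exact_mod_cast hε.ne')

theorem CWbar_extends_CW_general (hp : 1 ≤ p) (hdA : Measurable fun z : A × A => dA z.1 z.2)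
    (hμ : ∫⁻ z, edist x₀ z.2 ^ p ∂μ ≠ ∞) (hν : ∫⁻ z, edist x₀ z.2 ^ p ∂ν ≠ ∞) :
    CW2 p dA edist μ ν = CWbar p dA edist (disint μ) (disint ν) :=
  (CW2_le_CWbar_disint hp hdA hμ hν).antisymm
    (CWbar_disint_le_CW2 (one_pos.trans_le hp) dA measurable_edist)

end Comparison

lemma MemPp.lintegral_edist_snd_rpow_ne_top {A B : Type*} [MeasurableSpace A]
    [PseudoMetricSpace B] [MeasurableSpace B] [OpensMeasurableSpace B]
    {p : ℝ} (hp : 1 ≤ p) {dA : A → A → ℝ≥0∞} {μ : Measure (A × B)}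
    (hμ : MemPp p (prodDist p dA edist) μ) (x₀ : B) : ∫⁻ z, edist x₀ z.2 ^ p ∂μ ≠ ∞ := by
  have hp' : 0 < p := one_pos.trans_le hp
  obtain ⟨_, z₀, hz₀⟩ := hμ
  have h_snd : ∫⁻ z, edist z₀.2 z.2 ^ p ∂μ ≠ ∞ := by
    refine ne_top_of_le_ne_top hz₀ (lintegral_mono fun z => ?_)
    rw [prodDist, ← ENNReal.rpow_mul, one_div_mul_cancel hp'.ne', ENNReal.rpow_one]
    exact le_add_self
  refine ne_top_of_le_ne_top ?_ (lintegral_mono fun z => edist_rpow_le hp z₀.2 x₀ z.2)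
  rw [lintegral_add_left measurable_const, lintegral_const, measure_univ,
    lintegral_const_mul _ (by fun_prop)]
  finiteness

/-- `CW̄_p` extends the two-time-point causal Wasserstein distance `CW_p` under
the disintegration embedding of `𝒫_p(𝒳₁ × 𝒳₂)` into `𝒫_p(𝒳₁ × 𝒫_p(𝒳₂))`. -/
theorem CWbar_extends_CW
    {X1 X2 : Type} [MetricSpace X1] [CompleteSpace X1] [SecondCountableTopology X1]
    [MeasurableSpace X1] [BorelSpace X1] [Nonempty X1]
    [MetricSpace X2] [CompleteSpace X2] [SecondCountableTopology X2]
    [MeasurableSpace X2] [BorelSpace X2] [Nonempty X2]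
    (p : ℝ) (hp : 1 ≤ p)
    (μ ν : Measure (X1 × X2))
    (hμ : MemPp p (prodDist p (edist : X1 → X1 → ℝ≥0∞) (edist : X2 → X2 → ℝ≥0∞)) μ)
    (hν : MemPp p (prodDist p (edist : X1 → X1 → ℝ≥0∞) (edist : X2 → X2 → ℝ≥0∞)) ν) :
    CW2 p (edist : X1 → X1 → ℝ≥0∞) (edist : X2 → X2 → ℝ≥0∞) μ ν =
      CWbar p edist edist (disint μ) (disint ν) := by
  have := hμ.1
  have := hν.1
  let x₀ := Classical.arbitrary X2
  exact CWbar_extends_CW_general hp measurable_edist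
    (hμ.lintegral_edist_snd_rpow_ne_top hp x₀) (hν.lintegral_edist_snd_rpow_ne_top hp x₀)

end AWPaper
end
end

section
/- For all μ, ν ∈ 𝒫_p(𝒳_1 × 𝒫_p(𝒳_2)) one has CW̄_p(μ, ν) ≤ AW̄_p(μ, ν). -/
open MeasureTheory ProbabilityTheory ENNReal Filter Topology

noncomputable section

namespace AWPaper

/-! ### Generic constructions -/

variable {α β : Type*}

/-! ### Path spaces -/

variable {X : Type*} [MeasurableSpace X]

/-!
Couple `μ` and `ν` by an arbitrary `γ` and keep this coupling: it suffices to show that replacing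
`X̂₂` by its conditional expectation given `Y⃗` does not increase `E_γ[W_p(X̂₂, Ŷ₂)^p]`. This is the
conditional Jensen inequality for the jointly convex function `W_p^p`, as `Ŷ₂` is a function of
`Y⃗`. On a finite space the epigraph of `W_p^p` is a closed convex set of finite dimension, so the
conditional expectation of `(X̂₂, Ŷ₂, W_p(X̂₂, Ŷ₂)^p)` stays in it. In general, push all measures
forward along a map `T` with finitely many values; by Minkowski's inequality this costs at most
four times the larger of the `L^p` sizes of `x ↦ d(x, T x)` under the mean measures of `X̂₂` and
`Ŷ₂`, which the moment assumptions make arbitrarily small.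
-/

section LowerLpNorm

variable {Ω Ω' : Type*} [MeasurableSpace Ω] [MeasurableSpace Ω'] {p : ℝ}
  {P : Measure Ω} {f g : Ω → ℝ≥0∞}

/-- The `L^p` size of an `ℝ≥0∞`-valued function, which need not be measurable: `lintegral` is then
the lower integral. This is the functional that occurs in the definitions of `Wp`, `AWbar` and
`CWbar`. -/
def lowerLpNorm (p : ℝ) (P : Measure Ω) (f : Ω → ℝ≥0∞) : ℝ≥0∞ :=
  (∫⁻ ω, f ω ^ p ∂P) ^ (1 / p)

lemma rpow_rpow_one_div (hp : 1 ≤ p) (x : ℝ≥0∞) : (x ^ p) ^ (1 / p) = x := by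
  rw [one_div, ENNReal.rpow_rpow_inv (by positivity)]

lemma rpow_one_div_rpow (hp : 1 ≤ p) (x : ℝ≥0∞) : (x ^ (1 / p)) ^ p = x := by
  rw [one_div, ENNReal.rpow_inv_rpow (by positivity)]

lemma lowerLpNorm_rpow (hp : 1 ≤ p) : lowerLpNorm p P f ^ p = ∫⁻ ω, f ω ^ p ∂P :=
  rpow_one_div_rpow hp _

lemma lowerLpNorm_mono_ae (hp : 1 ≤ p) (h : f ≤ᵐ[P] g) : lowerLpNorm p P f ≤ lowerLpNorm p P g := by
  have hp0 : 0 ≤ p := by positivity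
  unfold lowerLpNorm
  gcongr ?_ ^ _
  exact lintegral_mono_ae (h.mono fun ω hω => ENNReal.rpow_le_rpow hω hp0)

lemma lowerLpNorm_mono (hp : 1 ≤ p) (h : f ≤ g) : lowerLpNorm p P f ≤ lowerLpNorm p P g :=
  lowerLpNorm_mono_ae hp (ae_of_all _ h)

lemma lowerLpNorm_const (hp : 1 ≤ p) [IsProbabilityMeasure P] (c : ℝ≥0∞) :
    lowerLpNorm p P (fun _ => c) = c := by
  simp only [lowerLpNorm, lintegral_const, measure_univ, mul_one, rpow_rpow_one_div hp]

lemma lowerLpNorm_map {φ : Ω → Ω'} (hφ : Measurable φ) {f : Ω' → ℝ≥0∞} (hf : Measurable f) :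
    lowerLpNorm p (P.map φ) f = lowerLpNorm p P (f ∘ φ) := by
  simp only [lowerLpNorm, lintegral_map (hf.pow_const p) hφ, Function.comp_apply]

lemma lowerLpNorm_map_le (hp : 1 ≤ p) (f : Ω' → ℝ≥0∞) (φ : Ω → Ω') :
    lowerLpNorm p (P.map φ) f ≤ lowerLpNorm p P (f ∘ φ) := by
  unfold lowerLpNorm
  gcongr ?_ ^ _
  exact lintegral_map_le _ φ

lemma lowerLpNorm_bind (hp : 1 ≤ p) {M : Ω → Measure Ω'} (hM : AEMeasurable M P)
    {f : Ω' → ℝ≥0∞} (hf : Measurable f) :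
    lowerLpNorm p P (fun ω => lowerLpNorm p (M ω) f) = lowerLpNorm p (P.bind M) f := by
  simp only [lowerLpNorm, rpow_one_div_rpow hp,
    Measure.lintegral_bind hM (hf.pow_const p).aemeasurable]

-- A measurable minorant `k` of `f + g` with the same `L^p` size has the measurable part
-- `k - g ≤ f`, so Minkowski for measurable functions applies to `(k - g) + g`.
lemma lowerLpNorm_add_le (hp : 1 ≤ p) (f : Ω → ℝ≥0∞) (hg : AEMeasurable g P) :
    lowerLpNorm p P (f + g) ≤ lowerLpNorm p P f + lowerLpNorm p P g := by
  obtain ⟨h, h_meas, h_le, h_eq⟩ := exists_measurable_le_lintegral_eq P fun ω => (f + g) ω ^ p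
  set k : Ω → ℝ≥0∞ := fun ω => h ω ^ (1 / p)
  have k_meas : Measurable k := h_meas.pow_const _
  have norm_k : lowerLpNorm p P (f + g) = lowerLpNorm p P k := by
    simp only [lowerLpNorm, k, rpow_one_div_rpow hp, h_eq]
  have k_le : k ≤ f + g := fun ω => by
    rw [← rpow_rpow_one_div hp ((f + g) ω)]
    exact ENNReal.rpow_le_rpow (h_le ω) (by positivity)
  calc lowerLpNorm p P (f + g) = lowerLpNorm p P k := norm_k
    _ ≤ lowerLpNorm p P ((k - g) + g) := lowerLpNorm_mono hp fun ω => le_tsub_add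
    _ ≤ lowerLpNorm p P (k - g) + lowerLpNorm p P g :=
        ENNReal.lintegral_Lp_add_le (k_meas.aemeasurable.sub hg) hg hp
    _ ≤ lowerLpNorm p P f + lowerLpNorm p P g := by
        gcongr
        exact lowerLpNorm_mono hp fun ω => tsub_le_iff_right.2 (k_le ω)

end LowerLpNorm

section Couplings

variable {Y Z : Type*} [MeasurableSpace Y] [MeasurableSpace Z] {p : ℝ}

lemma Cpl.isProbabilityMeasure {m : Measure X} {n : Measure Y} [IsProbabilityMeasure m]
    {π : Measure (X × Y)} (hπ : π ∈ Cpl m n) : IsProbabilityMeasure π :=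
  have : IsProbabilityMeasure (π.map Prod.fst) := hπ.1 ▸ ‹_›
  Measure.isProbabilityMeasure_of_map Prod.fst

lemma Cpl.swap {m : Measure X} {n : Measure Y} {π : Measure (X × Y)} (hπ : π ∈ Cpl m n) :
    π.map Prod.swap ∈ Cpl n m := by
  constructor
  · rw [Measure.map_map measurable_fst measurable_swap, ← hπ.2]
    rfl
  · rw [Measure.map_map measurable_snd measurable_swap, ← hπ.1]
    rfl

lemma Cpl.map_prodMap {X' Y' : Type*} [MeasurableSpace X'] [MeasurableSpace Y'] {m : Measure X}
    {n : Measure Y} {π : Measure (X × Y)} (hπ : π ∈ Cpl m n) {s : X → X'} (hs : Measurable s)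
    {t : Y → Y'} (ht : Measurable t) : π.map (Prod.map s t) ∈ Cpl (m.map s) (n.map t) := by
  constructor
  · rw [Measure.map_map measurable_fst (hs.prodMap ht), ← hπ.1, Measure.map_map hs measurable_fst]
    rfl
  · rw [Measure.map_map measurable_snd (hs.prodMap ht), ← hπ.2, Measure.map_map ht measurable_snd]
    rfl

lemma Cpl.lowerLpNorm_fst {m : Measure X} {n : Measure Y} {π : Measure (X × Y)}
    (hπ : π ∈ Cpl m n) {f : X → ℝ≥0∞} (hf : Measurable f) :
    lowerLpNorm p π (f ∘ Prod.fst) = lowerLpNorm p m f := by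
  rw [← lowerLpNorm_map measurable_fst hf, hπ.1]

lemma Cpl.lowerLpNorm_snd {m : Measure X} {n : Measure Y} {π : Measure (X × Y)}
    (hπ : π ∈ Cpl m n) {f : Y → ℝ≥0∞} (hf : Measurable f) :
    lowerLpNorm p π (f ∘ Prod.snd) = lowerLpNorm p n f := by
  rw [← lowerLpNorm_map measurable_snd hf, hπ.2]

lemma Cpl.bind_comp_fst {m : Measure X}
    {n : Measure Y} {π : Measure (X × Y)} (hπ : π ∈ Cpl m n) {f : X → Measure Z}
    (hf : Measurable f) : π.bind (f ∘ Prod.fst) = m.bind f := by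
  rw [← hπ.1]
  simp only [Measure.bind, Measure.map_map hf measurable_fst]

lemma Cpl.bind_comp_snd {m : Measure X}
    {n : Measure Y} {π : Measure (X × Y)} (hπ : π ∈ Cpl m n) {f : Y → Measure Z}
    (hf : Measurable f) : π.bind (f ∘ Prod.snd) = n.bind f := by
  rw [← hπ.2]
  simp only [Measure.bind, Measure.map_map hf measurable_snd]

lemma Cpl.ae_fst {m : Measure X} {n : Measure Y} {π : Measure (X × Y)} (hπ : π ∈ Cpl m n)
    {q : X → Prop} (hq : ∀ᵐ x ∂m, q x) : ∀ᵐ z ∂π, q z.1 :=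
  ae_of_ae_map measurable_fst.aemeasurable (hπ.1 ▸ hq)

lemma Cpl.ae_snd {m : Measure X} {n : Measure Y} {π : Measure (X × Y)} (hπ : π ∈ Cpl m n)
    {q : Y → Prop} (hq : ∀ᵐ y ∂n, q y) : ∀ᵐ z ∂π, q z.2 :=
  ae_of_ae_map measurable_snd.aemeasurable (hπ.2 ▸ hq)

lemma compProd_comap_map_prodMap_id {m : Measure X} [SFinite m] {κ : Kernel Y Z}
    [IsSFiniteKernel κ] {T : X → Y} (hT : Measurable T) :
    (m ⊗ₘ κ.comap T hT).map (Prod.map T id) = m.map T ⊗ₘ κ := by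
  ext S hS
  rw [Measure.map_apply (hT.prodMap measurable_id) hS, Measure.compProd_apply hS,
    Measure.compProd_apply (hT.prodMap measurable_id hS),
    lintegral_map (Kernel.measurable_kernel_prodMk_left hS) hT]
  rfl

lemma Cpl.exists_of_map [StandardBorelSpace Z] [Nonempty Z] {m : Measure X} [IsFiniteMeasure m]
    {n : Measure Z} {T : X → Y} (hT : Measurable T) {π : Measure (Y × Z)}
    (hπ : π ∈ Cpl (m.map T) n) : ∃ ρ ∈ Cpl m n, ρ.map (Prod.map T id) = π := by
  have : IsFiniteMeasure (π.map Prod.fst) := hπ.1 ▸ inferInstance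
  have : IsFiniteMeasure π := Measure.isFiniteMeasure_of_map measurable_fst.aemeasurable
  set ρ := m ⊗ₘ π.condKernel.comap T hT
  have ρ_map : ρ.map (Prod.map T id) = π := by
    rw [compProd_comap_map_prodMap_id hT, ← hπ.1]
    exact π.disintegrate π.condKernel
  refine ⟨ρ, ⟨Measure.fst_compProd .., ?_⟩, ρ_map⟩
  rw [← hπ.2, ← ρ_map, Measure.map_map measurable_snd (hT.prodMap measurable_id)]
  rfl

end Couplings

section Wasserstein

variable {Y : Type*} [MeasurableSpace Y] {p : ℝ} {d d' : X → X → ℝ≥0∞} {m n : Measure X}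

lemma Wp_le_lowerLpNorm {π : Measure (X × X)} (hπ : π ∈ Cpl m n) :
    Wp p d m n ≤ lowerLpNorm p π fun z => d z.1 z.2 :=
  iInf₂_le π hπ

lemma Wp_rpow (hp : 1 ≤ p) : Wp p d m n ^ p = ⨅ π ∈ Cpl m n, ∫⁻ z, d z.1 z.2 ^ p ∂π := by
  have hp0 : 0 < p := by positivity
  simp only [Wp, ← ENNReal.orderIsoRpow_apply p hp0, OrderIso.map_iInf]
  simp only [ENNReal.orderIsoRpow_apply, rpow_one_div_rpow hp]

lemma Wp_comm (hp : 1 ≤ p) (hd : ∀ x y, d x y = d y x) (m n : Measure X) :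
    Wp p d m n = Wp p d n m := by
  have swap_le (m n : Measure X) : Wp p d n m ≤ Wp p d m n := le_iInf₂ fun π hπ => calc
    Wp p d n m ≤ lowerLpNorm p (π.map Prod.swap) fun z => d z.1 z.2 :=
        Wp_le_lowerLpNorm (Cpl.swap hπ)
    _ ≤ lowerLpNorm p π fun z => d z.2 z.1 := lowerLpNorm_map_le hp _ _
    _ = lowerLpNorm p π fun z => d z.1 z.2 := by simp only [hd]
  exact le_antisymm (swap_le n m) (swap_le m n)

lemma Wp_map_le (hp : 1 ≤ p) {s : Y → X} (hs : Measurable s) (m n : Measure Y) :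
    Wp p d (m.map s) (n.map s) ≤ Wp p (fun x y => d (s x) (s y)) m n :=
  le_iInf₂ fun _ hπ =>
    (Wp_le_lowerLpNorm (Cpl.map_prodMap hπ hs hs)).trans (lowerLpNorm_map_le hp _ _)

lemma Wp_le_add_Wp_add (hp : 1 ≤ p) {e e' : X → ℝ≥0∞} (he : Measurable e) (he' : Measurable e')
    (h : ∀ x y, d' x y ≤ e x + d x y + e' y) (m n : Measure X) :
    Wp p d' m n ≤ lowerLpNorm p m e + Wp p d m n + lowerLpNorm p n e' := by
  simp only [Wp, ENNReal.iInf_add, ENNReal.add_iInf]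
  refine iInf₂_mono fun π hπ => ?_
  rw [← Cpl.lowerLpNorm_fst hπ he, ← Cpl.lowerLpNorm_snd hπ he']
  calc lowerLpNorm p π (fun z => d' z.1 z.2)
      ≤ lowerLpNorm p π ((fun z => d z.1 z.2) + e ∘ Prod.fst + e' ∘ Prod.snd) :=
        lowerLpNorm_mono hp fun z => (h z.1 z.2).trans_eq (by simp [add_comm])
    _ ≤ lowerLpNorm p π ((fun z => d z.1 z.2) + e ∘ Prod.fst) + lowerLpNorm p π (e' ∘ Prod.snd) :=
        lowerLpNorm_add_le hp _ (by fun_prop)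
    _ ≤ lowerLpNorm p π (fun z => d z.1 z.2) + lowerLpNorm p π (e ∘ Prod.fst)
          + lowerLpNorm p π (e' ∘ Prod.snd) := by
        gcongr
        exact lowerLpNorm_add_le hp _ (by fun_prop)
    _ = _ := by rw [add_comm (lowerLpNorm p π (e ∘ Prod.fst))]; rfl

lemma lowerLpNorm_le_add_Wp (hp : 1 ≤ p) {f : X → ℝ≥0∞} (hf : Measurable f)
    (h : ∀ x y, f y ≤ f x + d x y) (m n : Measure X) :
    lowerLpNorm p n f ≤ lowerLpNorm p m f + Wp p d m n := by
  simp only [Wp, ENNReal.add_iInf]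
  refine le_iInf₂ fun π hπ => ?_
  rw [← Cpl.lowerLpNorm_fst hπ hf, ← Cpl.lowerLpNorm_snd hπ hf, add_comm]
  calc lowerLpNorm p π (f ∘ Prod.snd)
      ≤ lowerLpNorm p π ((fun z => d z.1 z.2) + f ∘ Prod.fst) :=
        lowerLpNorm_mono hp fun z => (h z.1 z.2).trans_eq (add_comm _ _)
    _ ≤ lowerLpNorm p π (fun z => d z.1 z.2) + lowerLpNorm p π (f ∘ Prod.fst) :=
        lowerLpNorm_add_le hp _ (by fun_prop)

lemma Wp_le_add_Wp_map [StandardBorelSpace X] (hp : 1 ≤ p)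
    (hd : Measurable (Function.uncurry d)) (htri : ∀ x y z, d x z ≤ d x y + d y z)
    {T : X → X} (hT : Measurable T) (m n : Measure X) [IsProbabilityMeasure m] :
    Wp p d m n ≤ lowerLpNorm p m (fun x => d x (T x)) + Wp p d (m.map T) n := by
  have := m.nonempty_of_neZero
  have e_meas : Measurable fun x => d x (T x) := hd.comp (measurable_id.prodMk hT)
  rw [add_comm]
  conv_rhs => simp only [Wp, ENNReal.iInf_add]
  refine le_iInf₂ fun π hπ => ?_
  obtain ⟨ρ, hρ, rfl⟩ := Cpl.exists_of_map hT hπ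
  calc Wp p d m n ≤ lowerLpNorm p ρ fun z => d z.1 z.2 := Wp_le_lowerLpNorm hρ
    _ ≤ lowerLpNorm p ρ ((fun z => d (T z.1) z.2) + (fun x => d x (T x)) ∘ Prod.fst) :=
        lowerLpNorm_mono hp fun z => (htri _ (T z.1) _).trans_eq (add_comm _ _)
    _ ≤ lowerLpNorm p ρ (fun z => d (T z.1) z.2)
          + lowerLpNorm p ρ ((fun x => d x (T x)) ∘ Prod.fst) :=
        lowerLpNorm_add_le hp _ (by fun_prop)
    _ = _ := by
        rw [Cpl.lowerLpNorm_fst hρ e_meas]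
        congr 1
        exact (lowerLpNorm_map (hT.prodMap measurable_id) hd).symm

lemma Wp_le_add_Wp_map_add [StandardBorelSpace X] (hp : 1 ≤ p)
    (hd : Measurable (Function.uncurry d)) (hsymm : ∀ x y, d x y = d y x)
    (htri : ∀ x y z, d x z ≤ d x y + d y z) {T : X → X} (hT : Measurable T) (m n : Measure X)
    [IsProbabilityMeasure m] [IsProbabilityMeasure n] :
    Wp p d m n ≤ lowerLpNorm p m (fun x => d x (T x)) + Wp p d (m.map T) (n.map T)
      + lowerLpNorm p n (fun x => d x (T x)) := by
  have n_le := Wp_le_add_Wp_map hp hd htri hT n (m.map T)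
  rw [Wp_comm hp hsymm n, Wp_comm hp hsymm (n.map T)] at n_le
  rw [add_assoc, add_comm (Wp p d (m.map T) _)]
  exact (Wp_le_add_Wp_map hp hd htri hT m n).trans (by gcongr)

end Wasserstein

section CondBarycenter

variable {Ω Y : Type*} [MeasurableSpace Y]

/-- `η` is a version of the conditional expectation, given the `σ`-algebra `𝓖`, of the random
measure `M`: the probability-measure-valued conditional expectation, characterized by integrating
the masses of all measurable sets over all events of `𝓖`. `IsCondBar` is the case in which `M` and
`𝓖` come from a pair of coordinates. -/
structure IsCondBarycenter (𝓖 : MeasurableSpace Ω) {mΩ : MeasurableSpace Ω} (P : Measure Ω)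
    (M η : Ω → Measure X) : Prop where
  measurable : Measurable[𝓖] η
  isProbabilityMeasure : ∀ᵐ ω ∂P, IsProbabilityMeasure (η ω)
  setLIntegral_eq : ∀ S, MeasurableSet[𝓖] S → ∀ E, MeasurableSet E →
    ∫⁻ ω in S, η ω E ∂P = ∫⁻ ω in S, M ω E ∂P

namespace IsCondBarycenter

variable {𝓖 mΩ : MeasurableSpace Ω} {P : Measure Ω} {M η : Ω → Measure X}

lemma map (h : IsCondBarycenter 𝓖 P M η) {t : X → Y} (ht : Measurable t) :
    IsCondBarycenter 𝓖 P (fun ω => (M ω).map t) (fun ω => (η ω).map t) where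
  measurable := (Measure.measurable_map t ht).comp h.measurable
  isProbabilityMeasure := h.isProbabilityMeasure.mono fun _ _ =>
    Measure.isProbabilityMeasure_map ht.aemeasurable
  setLIntegral_eq S hS E hE := by
    simpa only [Measure.map_apply ht hE] using h.setLIntegral_eq S hS _ (ht hE)

lemma bind_eq (h : IsCondBarycenter 𝓖 P M η) (h𝓖 : 𝓖 ≤ mΩ) (hM : AEMeasurable M P) :
    P.bind η = P.bind M := by
  ext E hE
  rw [Measure.bind_apply hE (h.measurable.mono h𝓖 le_rfl).aemeasurable, Measure.bind_apply hE hM]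
  simpa only [Measure.restrict_univ] using h.setLIntegral_eq _ MeasurableSet.univ E hE

lemma real_ae_eq_condExp [IsFiniteMeasure P] (h : IsCondBarycenter 𝓖 P M η) (h𝓖 : 𝓖 ≤ mΩ)
    (hM : Measurable M) (hM_prob : ∀ᵐ ω ∂P, IsProbabilityMeasure (M ω)) {E : Set X}
    (hE : MeasurableSet E) :
    (fun ω => (η ω).real E) =ᵐ[P] P[fun ω => (M ω).real E | 𝓖] := by
  have meas_eval := Measure.measurable_coe hE
  have real_integrable {K : Ω → Measure X} (hK : Measurable K)
      (hK_prob : ∀ᵐ ω ∂P, IsProbabilityMeasure (K ω)) : Integrable (fun ω => (K ω).real E) P := by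
    refine .of_bound (meas_eval.comp hK).ennreal_toReal.aestronglyMeasurable 1 ?_
    filter_upwards [hK_prob] with ω _
    exact (abs_of_nonneg measureReal_nonneg).trans_le measureReal_le_one
  have setIntegral_real {K : Ω → Measure X} (hK : Measurable K)
      (hK_prob : ∀ᵐ ω ∂P, IsProbabilityMeasure (K ω)) (S : Set Ω) :
      ∫ ω in S, (K ω).real E ∂P = (∫⁻ ω in S, K ω E ∂P).toReal := by
    refine integral_toReal (meas_eval.comp hK).aemeasurable (ae_restrict_of_ae ?_)
    exact hK_prob.mono fun ω _ => measure_lt_top _ _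
  have η_meas : Measurable η := h.measurable.mono h𝓖 le_rfl
  refine ae_eq_condExp_of_forall_setIntegral_eq h𝓖 (real_integrable hM hM_prob)
    (fun _ _ _ => (real_integrable η_meas h.isProbabilityMeasure).integrableOn)
    (fun S hS _ => ?_) (meas_eval.comp h.measurable).ennreal_toReal.aestronglyMeasurable
  rw [setIntegral_real η_meas h.isProbabilityMeasure, setIntegral_real hM hM_prob,
    h.setLIntegral_eq S hS E hE]

end IsCondBarycenter

variable {A B : Type*} [MeasurableSpace A] [MeasurableSpace B]
  {γ : Measure ((A × Measure B) × (A × Measure B))}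

lemma IsCondBar.isCondBarycenter {η : (A × Measure B) × (A × Measure B) → Measure B}
    (h : IsCondBar γ η) :
    IsCondBarycenter (.comap Prod.snd inferInstance) γ
      (fun z => z.1.2) η := by
  obtain ⟨⟨g, g_meas, hg⟩, η_prob, η_eq⟩ := h
  refine ⟨?_, ae_of_all _ η_prob, ?_⟩
  · rw [funext hg]
    exact g_meas.comp (comap_measurable _)
  · rintro _ ⟨S, hS, rfl⟩ E hE
    exact η_eq S hS E hE

lemma exists_isCondBar [StandardBorelSpace B] [IsProbabilityMeasure γ]
    (hγ : ∀ᵐ z ∂γ, IsProbabilityMeasure z.1.2) : ∃ η, IsCondBar γ η := by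
  let K : Kernel ((A × Measure B) × (A × Measure B)) B := ⟨fun z => z.1.2, by fun_prop⟩
  obtain ⟨κ, hκ, _⟩ := Kernel.exists_ae_eq_isMarkovKernel (κ := K) hγ
    (IsProbabilityMeasure.ne_zero γ)
  have : Nonempty B := (κ (Classical.choice γ.nonempty_of_neZero)).nonempty_of_neZero
  set Y : ((A × Measure B) × (A × Measure B)) × B → A × Measure B := fun w => w.1.2
  have Y_meas : Measurable Y := by fun_prop
  set g := condDistrib Prod.snd Y (γ ⊗ₘ κ)
  refine ⟨fun z => g z.2, ⟨g, g.measurable, fun _ => rfl⟩, fun _ => inferInstance, ?_⟩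
  intro S hS E hE
  have g_meas : Measurable fun z : (A × Measure B) × (A × Measure B) => g z.2 E :=
    (g.measurable_coe hE).comp measurable_snd
  calc ∫⁻ z in {z | z.2 ∈ S}, g z.2 E ∂γ
      = ∫⁻ z in Prod.snd ⁻¹' S, g z.2 E ∂(γ ⊗ₘ κ).fst := by rw [Measure.fst_compProd]; rfl
    _ = ∫⁻ w in Y ⁻¹' S, g (Y w) E ∂(γ ⊗ₘ κ) := by
        rw [Measure.fst, setLIntegral_map (measurable_snd hS) g_meas measurable_fst]
        rfl
    _ = (γ ⊗ₘ κ) (Y ⁻¹' S ∩ Prod.snd ⁻¹' E) :=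
        setLIntegral_preimage_condDistrib Y_meas measurable_snd.aemeasurable hE hS
    _ = ∫⁻ z in Prod.snd ⁻¹' S, κ z E ∂γ :=
        Measure.compProd_apply_prod (measurable_snd hS) hE
    _ = ∫⁻ z in {z | z.2 ∈ S}, z.1.2 E ∂γ :=
        lintegral_congr_ae (ae_restrict_of_ae (hκ.mono fun z hz => congrArg (· E) hz.symm))

end CondBarycenter

section TransportEpigraph

open scoped Pointwise

variable {R : Type*} [Fintype R]

/-- The epigraph of the optimal transport cost on a finite space, as a function of the weights of
the two marginals: `(a, b, t)` belongs to it when some transport plan from `a` to `b` has total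
cost at most `t`. -/
def transportEpigraph (c : R × R → ℝ) : Set ((R → ℝ) × (R → ℝ) × ℝ) :=
  {x | ∃ q ∈ stdSimplex ℝ (R × R), FunOnFinite.linearMap ℝ ℝ Prod.fst q = x.1 ∧
    FunOnFinite.linearMap ℝ ℝ Prod.snd q = x.2.1 ∧ Fintype.linearCombination ℝ c q ≤ x.2.2}

/-- The marginals of a transport plan and its total cost. -/
def transportMap (c : R × R → ℝ) : (R × R → ℝ) →ₗ[ℝ] (R → ℝ) × (R → ℝ) × ℝ :=
  (FunOnFinite.linearMap ℝ ℝ Prod.fst).prod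
    ((FunOnFinite.linearMap ℝ ℝ Prod.snd).prod (Fintype.linearCombination ℝ c))

lemma transportEpigraph_eq_image_add (c : R × R → ℝ) :
    transportEpigraph c =
      transportMap c '' stdSimplex ℝ (R × R) + ({0} ×ˢ {0} ×ˢ Set.Ici (0 : ℝ)) := by
  ext ⟨a, b, t⟩
  simp only [Set.mem_add, Set.exists_mem_image]
  constructor
  · rintro ⟨q, hq, rfl, rfl, ht⟩
    exact ⟨q, hq, (0, 0, t - Fintype.linearCombination ℝ c q), by simpa using ht,
      by simp [transportMap]⟩
  · rintro ⟨q, hq, ⟨_, _, s⟩, ⟨rfl, rfl, hs⟩, h⟩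
    simp only [transportMap, LinearMap.prod_apply, Function.prod, Prod.mk_add_mk,
      Prod.mk.injEq, add_zero] at h
    exact ⟨q, hq, h.1, h.2.1, h.2.2 ▸ le_add_of_nonneg_right hs⟩

lemma convex_transportEpigraph (c : R × R → ℝ) : Convex ℝ (transportEpigraph c) := by
  rw [transportEpigraph_eq_image_add]
  exact ((convex_stdSimplex ℝ _).linear_image _).add
    ((convex_singleton 0).prod ((convex_singleton 0).prod (convex_Ici 0)))

lemma isClosed_transportEpigraph (c : R × R → ℝ) : IsClosed (transportEpigraph c) := by
  rw [transportEpigraph_eq_image_add]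
  refine (isClosed_singleton.prod (isClosed_singleton.prod isClosed_Ici)).add_left_of_isCompact ?_
  exact (isCompact_stdSimplex ℝ _).image (transportMap c).continuous_of_finiteDimensional

end TransportEpigraph

section FiniteTransport

variable {R : Type*} [MeasurableSpace R] [MeasurableSingletonClass R]

/-- A measure on a finite space, encoded as the vector of the masses of its points. -/
def weights (m : Measure R) : R → ℝ := fun r => m.real {r}

lemma measurable_weights : Measurable (weights : Measure R → R → ℝ) :=
  measurable_pi_lambda _ fun r =>
    (Measure.measurable_coe (measurableSet_singleton r)).ennreal_toReal

lemma weights_map {S : Type*} [Finite R] [Finite S] [MeasurableSpace S]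
    [MeasurableSingletonClass S] (m : Measure R) [IsFiniteMeasure m] (f : R → S) :
    weights (m.map f) = FunOnFinite.linearMap ℝ ℝ f (weights m) := by
  classical
  have := Fintype.ofFinite R
  refine funext fun s => ?_
  simp only [weights, FunOnFinite.linearMap_apply_apply]
  change _ = ∑ r with f r = s, m.real {r}
  rw [map_measureReal_apply (measurable_of_finite f) (measurableSet_singleton s),
    sum_measureReal_singleton, Finset.coe_filter_univ]
  rfl

lemma exists_weights_eq [Finite R] {q : R → ℝ} (hq : ∀ r, 0 ≤ q r) :
    ∃ m : Measure R, IsFiniteMeasure m ∧ weights m = q := by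
  have := Fintype.ofFinite R
  set m := Measure.count.withDensity fun r => ENNReal.ofReal (q r)
  have m_singleton (r : R) : m {r} = ENNReal.ofReal (q r) := by
    simp [m, withDensity_apply]
  refine ⟨m, isFiniteMeasure_withDensity ?_, funext fun r => ?_⟩
  · simp [lintegral_fintype]
  · simp [weights, measureReal_def, m_singleton, hq]

variable [Fintype R]

lemma weights_mem_stdSimplex (m : Measure R) [IsProbabilityMeasure m] :
    weights m ∈ stdSimplex ℝ R :=
  ⟨fun _ => measureReal_nonneg, by simp [weights]⟩

lemma lintegral_eq_ofReal_linearCombination_weights (m : Measure R) [IsFiniteMeasure m]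
    {f : R → ℝ≥0∞} (hf : ∀ r, f r ≠ ∞) :
    ∫⁻ r, f r ∂m =
      ENNReal.ofReal (Fintype.linearCombination ℝ (fun r => (f r).toReal) (weights m)) := by
  simp only [lintegral_fintype, Fintype.linearCombination_apply, weights, smul_eq_mul]
  rw [ENNReal.ofReal_sum_of_nonneg fun _ _ => by positivity]
  refine Finset.sum_congr rfl fun r _ => ?_
  rw [mul_comm, ENNReal.ofReal_mul measureReal_nonneg, ofReal_measureReal,
    ENNReal.ofReal_toReal (hf r)]

variable {p : ℝ} {d : R → R → ℝ≥0∞} {m n : Measure R} {t : ℝ}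
  [IsProbabilityMeasure m]

/-- The real cost matrix `d ^ p`. -/
def powCost (p : ℝ) (d : R → R → ℝ≥0∞) (z : R × R) : ℝ := (d z.1 z.2 ^ p).toReal

lemma Cpl.weights_mem_transportEpigraph {π : Measure (R × R)} (hπ : π ∈ Cpl m n) {c : R × R → ℝ}
    (ht : Fintype.linearCombination ℝ c (weights π) ≤ t) :
    (weights m, weights n, t) ∈ transportEpigraph c := by
  have := Cpl.isProbabilityMeasure hπ
  exact ⟨weights π, weights_mem_stdSimplex π, by rw [← weights_map, hπ.1],
    by rw [← weights_map, hπ.2], ht⟩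

lemma mem_transportEpigraph_of_Wp_rpow_le_ofReal (hp : 1 ≤ p) (hd : ∀ x y, d x y ≠ ∞) (ht : 0 ≤ t)
    (h : Wp p d m n ^ p ≤ ENNReal.ofReal t) :
    (weights m, weights n, t) ∈ transportEpigraph (powCost p d) := by
  have mem_of_gt {s : ℝ} (hs : t < s) :
      (weights m, weights n, s) ∈ transportEpigraph (powCost p d) := by
    have lt_s : ⨅ π ∈ Cpl m n, ∫⁻ z, d z.1 z.2 ^ p ∂π < ENNReal.ofReal s := by
      rw [← Wp_rpow hp]
      exact h.trans_lt ((ENNReal.ofReal_lt_ofReal_iff (ht.trans_lt hs)).2 hs)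
    obtain ⟨π, hπ, π_lt⟩ := by simpa only [iInf_lt_iff, exists_prop] using lt_s
    have := Cpl.isProbabilityMeasure hπ
    rw [lintegral_eq_ofReal_linearCombination_weights π fun z => by finiteness [hd z.1 z.2]] at π_lt
    exact Cpl.weights_mem_transportEpigraph hπ (ENNReal.ofReal_lt_ofReal_iff'.1 π_lt).1.le
  have tendsto_t : Tendsto (fun s : ℝ => (weights m, weights n, s)) (𝓝[>] t)
      (𝓝 (weights m, weights n, t)) :=
    (Continuous.tendsto (by fun_prop) t).mono_left nhdsWithin_le_nhds
  exact (isClosed_transportEpigraph _).mem_of_tendsto tendsto_t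
    (eventually_mem_nhdsWithin.mono fun _ => mem_of_gt)

variable [IsProbabilityMeasure n]

lemma exists_mem_Cpl_of_mem_transportEpigraph {c : R × R → ℝ}
    (h : (weights m, weights n, t) ∈ transportEpigraph c) :
    ∃ π ∈ Cpl m n, Fintype.linearCombination ℝ c (weights π) ≤ t := by
  obtain ⟨q, hq, hm, hn, ht⟩ := h
  obtain ⟨π, _, rfl⟩ := exists_weights_eq hq.1
  rw [← weights_map] at hm hn
  exact ⟨π, ⟨Measure.ext_of_measureReal_singleton (congrFun hm),
    Measure.ext_of_measureReal_singleton (congrFun hn)⟩, ht⟩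

lemma Wp_rpow_le_ofReal_of_mem_transportEpigraph (hp : 1 ≤ p) (hd : ∀ x y, d x y ≠ ∞)
    (h : (weights m, weights n, t) ∈ transportEpigraph (powCost p d)) :
    Wp p d m n ^ p ≤ ENNReal.ofReal t := by
  obtain ⟨π, hπ, ht⟩ := exists_mem_Cpl_of_mem_transportEpigraph h
  have := Cpl.isProbabilityMeasure hπ
  rw [Wp_rpow hp]
  refine iInf₂_le_of_le π hπ ?_
  rw [lintegral_eq_ofReal_linearCombination_weights π fun z => by finiteness [hd z.1 z.2]]
  exact ENNReal.ofReal_le_ofReal ht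

lemma Wp_rpow_le_ofReal_iff (hp : 1 ≤ p) (hd : ∀ x y, d x y ≠ ∞) (ht : 0 ≤ t) :
    Wp p d m n ^ p ≤ ENNReal.ofReal t ↔
      (weights m, weights n, t) ∈ transportEpigraph (powCost p d) :=
  ⟨mem_transportEpigraph_of_Wp_rpow_le_ofReal hp hd ht,
    Wp_rpow_le_ofReal_of_mem_transportEpigraph hp hd⟩

end FiniteTransport

section CondExp

variable {Ω E F : Type*} {𝓖 mΩ : MeasurableSpace Ω} {P : Measure Ω}
  [NormedAddCommGroup E] [NormedSpace ℝ E] [CompleteSpace E]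
  [NormedAddCommGroup F] [NormedSpace ℝ F] [CompleteSpace F]

lemma condExp_prodMk {f : Ω → E} {g : Ω → F} (hf : Integrable f P) (hg : Integrable g P) :
    P[fun ω => (f ω, g ω) | 𝓖] =ᵐ[P] fun ω => (P[f | 𝓖] ω, P[g | 𝓖] ω) := by
  filter_upwards [(ContinuousLinearMap.fst ℝ E F).comp_condExp_comm (m := 𝓖) (hf.prodMk hg),
    (ContinuousLinearMap.snd ℝ E F).comp_condExp_comm (m := 𝓖) (hf.prodMk hg)] with ω h₁ h₂
  exact Prod.ext h₁ h₂

lemma condExp_pi {ι : Type*} [Fintype ι] {f : Ω → ι → E} (hf : Integrable f P) :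
    P[f | 𝓖] =ᵐ[P] fun ω i => P[fun ω => f ω i | 𝓖] ω := by
  have coord (i : ι) := (ContinuousLinearMap.proj (R := ℝ) (φ := fun _ : ι => E) i)
    |>.comp_condExp_comm (m := 𝓖) hf
  filter_upwards [ae_all_iff.2 coord] with ω hω
  exact funext hω

end CondExp

section FiniteJensen

variable {R Ω : Type*} [MeasurableSpace R] [MeasurableSingletonClass R]
  {𝓖 mΩ : MeasurableSpace Ω} {P : Measure Ω} {p : ℝ} {d : R → R → ℝ≥0∞}
  {M N η : Ω → Measure R}

lemma aemeasurable_Wp_rpow [Finite R] (hp : 1 ≤ p) (hd : ∀ x y, d x y ≠ ∞) (hM : Measurable M)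
    (hM_prob : ∀ᵐ ω ∂P, IsProbabilityMeasure (M ω)) (hN : Measurable N)
    (hN_prob : ∀ᵐ ω ∂P, IsProbabilityMeasure (N ω)) :
    AEMeasurable (fun ω => Wp p d (M ω) (N ω) ^ p) P := by
  have := Fintype.ofFinite R
  set s := {ω | IsProbabilityMeasure (M ω) ∧ IsProbabilityMeasure (N ω)}
  have s_meas : MeasurableSet s := (hM ProbabilityMeasure.measurableSet_isProbabilityMeasure).inter
    (hN ProbabilityMeasure.measurableSet_isProbabilityMeasure)
  refine ⟨s.indicator fun ω => Wp p d (M ω) (N ω) ^ p, measurable_of_Iic fun t => ?_, ?_⟩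
  · obtain rfl | ht := eq_or_ne t ∞
    · simp
    have preimage_eq : s.indicator (fun ω => Wp p d (M ω) (N ω) ^ p) ⁻¹' Set.Iic t =
        sᶜ ∪ (fun ω => (weights (M ω), weights (N ω), t.toReal)) ⁻¹'
          transportEpigraph (powCost p d) := by
      ext ω
      by_cases hω : ω ∈ s
      · have := hω.1
        have := hω.2
        simp [hω, ← Wp_rpow_le_ofReal_iff hp hd ENNReal.toReal_nonneg, ENNReal.ofReal_toReal ht]
      · simp [hω]
    rw [preimage_eq]
    exact s_meas.compl.union ((isClosed_transportEpigraph _).measurableSet.preimage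
      ((measurable_weights.comp hM).prodMk ((measurable_weights.comp hN).prodMk measurable_const)))
  · filter_upwards [hM_prob, hN_prob] with ω h₁ h₂
    exact (Set.indicator_of_mem (s := s) ⟨h₁, h₂⟩ fun ω => Wp p d (M ω) (N ω) ^ p).symm

lemma integrable_weights [Fintype R] [IsFiniteMeasure P] (hM : Measurable M)
    (hM_prob : ∀ᵐ ω ∂P, IsProbabilityMeasure (M ω)) : Integrable (fun ω => weights (M ω)) P := by
  refine .of_bound (measurable_weights.comp hM).aestronglyMeasurable 1 (hM_prob.mono fun ω _ => ?_)
  rw [pi_norm_le_iff_of_nonneg zero_le_one]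
  exact fun r => (abs_of_nonneg measureReal_nonneg).trans_le measureReal_le_one

lemma IsCondBarycenter.weights_ae_eq_condExp [Fintype R] [IsFiniteMeasure P]
    (h : IsCondBarycenter 𝓖 P M η) (h𝓖 : 𝓖 ≤ mΩ) (hM : Measurable M)
    (hM_prob : ∀ᵐ ω ∂P, IsProbabilityMeasure (M ω)) :
    (fun ω => weights (η ω)) =ᵐ[P] P[fun ω => weights (M ω) | 𝓖] := by
  filter_upwards [condExp_pi (integrable_weights hM hM_prob),
    ae_all_iff.2 fun r => h.real_ae_eq_condExp h𝓖 hM hM_prob (measurableSet_singleton r)]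
    with ω condExp_eq real_eq
  rw [condExp_eq]
  exact funext real_eq

lemma IsCondBarycenter.ae_mem_transportEpigraph [Fintype R] [IsFiniteMeasure P]
    (h : IsCondBarycenter 𝓖 P M η) (h𝓖 : 𝓖 ≤ mΩ) (hM : Measurable M)
    (hM_prob : ∀ᵐ ω ∂P, IsProbabilityMeasure (M ω)) (hN : Measurable[𝓖] N)
    (hN_prob : ∀ᵐ ω ∂P, IsProbabilityMeasure (N ω)) {c : R × R → ℝ} {v : Ω → ℝ}
    (hv : Integrable v P)
    (hmem : ∀ᵐ ω ∂P, (weights (M ω), weights (N ω), v ω) ∈ transportEpigraph c) :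
    ∀ᵐ ω ∂P, (weights (η ω), weights (N ω), P[v | 𝓖] ω) ∈ transportEpigraph c := by
  have M_int := integrable_weights hM hM_prob
  have N_int := integrable_weights (hN.mono h𝓖 le_rfl) hN_prob
  have condExp_mem := (convex_transportEpigraph c).condExp_mem h𝓖
    (M_int.prodMk (N_int.prodMk hv)) (isClosed_transportEpigraph c) hmem
  have condExp_N : P[fun ω => weights (N ω) | 𝓖] = fun ω => weights (N ω) :=
    condExp_of_stronglyMeasurable h𝓖 (measurable_weights.comp hN).stronglyMeasurable N_int
  filter_upwards [condExp_mem, condExp_prodMk (𝓖 := 𝓖) M_int (N_int.prodMk hv),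
    condExp_prodMk (𝓖 := 𝓖) N_int hv, h.weights_ae_eq_condExp h𝓖 hM hM_prob]
    with ω mem eq_pair eq_tail eq_weights
  rwa [eq_pair, eq_tail, condExp_N, ← eq_weights] at mem

lemma IsCondBarycenter.lintegral_Wp_rpow_le [Finite R] [IsFiniteMeasure P]
    (h : IsCondBarycenter 𝓖 P M η) (h𝓖 : 𝓖 ≤ mΩ) (hM : Measurable M)
    (hM_prob : ∀ᵐ ω ∂P, IsProbabilityMeasure (M ω)) (hN : Measurable[𝓖] N)
    (hN_prob : ∀ᵐ ω ∂P, IsProbabilityMeasure (N ω))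
    (hp : 1 ≤ p) (hd : ∀ x y, d x y ≠ ∞) :
    ∫⁻ ω, Wp p d (η ω) (N ω) ^ p ∂P ≤ ∫⁻ ω, Wp p d (M ω) (N ω) ^ p ∂P := by
  have := Fintype.ofFinite R
  by_cases h_top : ∫⁻ ω, Wp p d (M ω) (N ω) ^ p ∂P = ∞
  · exact h_top ▸ le_top
  set v : Ω → ℝ := fun ω => (Wp p d (M ω) (N ω) ^ p).toReal
  have W_meas := aemeasurable_Wp_rpow hp hd hM hM_prob (hN.mono h𝓖 le_rfl) hN_prob
  have ofReal_v : (fun ω => ENNReal.ofReal (v ω)) =ᵐ[P] fun ω => Wp p d (M ω) (N ω) ^ p :=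
    (ae_lt_top' W_meas h_top).mono fun ω hω => ENNReal.ofReal_toReal hω.ne
  have v_int : Integrable v P := integrable_toReal_of_lintegral_ne_top W_meas h_top
  have v_nonneg : 0 ≤ v := fun ω => ENNReal.toReal_nonneg
  have v_mem : ∀ᵐ ω ∂P,
      (weights (M ω), weights (N ω), v ω) ∈ transportEpigraph (powCost p d) := by
    filter_upwards [ofReal_v, hM_prob, hN_prob] with ω hω _ _
    exact (Wp_rpow_le_ofReal_iff hp hd (v_nonneg ω)).1 hω.ge
  calc ∫⁻ ω, Wp p d (η ω) (N ω) ^ p ∂P ≤ ∫⁻ ω, ENNReal.ofReal (P[v | 𝓖] ω) ∂P := by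
        refine lintegral_mono_ae ?_
        filter_upwards [h.ae_mem_transportEpigraph h𝓖 hM hM_prob hN hN_prob v_int v_mem,
          h.isProbabilityMeasure, hN_prob] with ω hω _ _
        exact Wp_rpow_le_ofReal_of_mem_transportEpigraph hp hd hω
    _ = ENNReal.ofReal (∫ ω, v ω ∂P) := by
        rw [← ofReal_integral_eq_lintegral_ofReal integrable_condExp
          (condExp_nonneg (ae_of_all _ v_nonneg)), integral_condExp h𝓖]
    _ = ∫⁻ ω, Wp p d (M ω) (N ω) ^ p ∂P := by
        rw [ofReal_integral_eq_lintegral_ofReal v_int (ae_of_all _ v_nonneg),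
          lintegral_congr_ae ofReal_v]

end FiniteJensen

section Quantization

variable {Y Ω : Type*} [MeasurableSpace Y] {p : ℝ}

lemma lowerLpNorm_le_bind_add_bind {mΩ : MeasurableSpace Ω} {P : Measure Ω} {M N : Ω → Measure X}
    (hp : 1 ≤ p) (hM : Measurable M) (hN : Measurable N) {e : X → ℝ≥0∞} (he : Measurable e)
    {f g : Ω → ℝ≥0∞}
    (h : ∀ᵐ ω ∂P, f ω ≤ lowerLpNorm p (M ω) e + g ω + lowerLpNorm p (N ω) e) :
    lowerLpNorm p P f ≤
      lowerLpNorm p (P.bind M) e + lowerLpNorm p P g + lowerLpNorm p (P.bind N) e := by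
  have norm_meas {K : Ω → Measure X} (hK : Measurable K) :
      Measurable fun ω => lowerLpNorm p (K ω) e :=
    ((Measure.measurable_lintegral (he.pow_const p)).comp hK).pow_const _
  rw [← lowerLpNorm_bind hp hM.aemeasurable he, ← lowerLpNorm_bind hp hN.aemeasurable he,
    add_comm (lowerLpNorm p P _)]
  calc lowerLpNorm p P f
      ≤ lowerLpNorm p P ((g + fun ω => lowerLpNorm p (M ω) e) + fun ω => lowerLpNorm p (N ω) e) :=
        lowerLpNorm_mono_ae hp (h.mono fun ω hω => hω.trans_eq (by simp [add_comm]))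
    _ ≤ lowerLpNorm p P (g + fun ω => lowerLpNorm p (M ω) e)
          + lowerLpNorm p P fun ω => lowerLpNorm p (N ω) e :=
        lowerLpNorm_add_le hp _ (norm_meas hN).aemeasurable
    _ ≤ _ := by
        gcongr
        exact lowerLpNorm_add_le hp _ (norm_meas hM).aemeasurable

namespace IsCondBarycenter

variable {𝓖 mΩ : MeasurableSpace Ω} {P : Measure Ω} [IsFiniteMeasure P] {M N η : Ω → Measure X}
  {d : X → X → ℝ≥0∞}

lemma lowerLpNorm_Wp_map_le [MeasurableSingletonClass Y] (h : IsCondBarycenter 𝓖 P M η)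
    (h𝓖 : 𝓖 ≤ mΩ) (hM : Measurable M) (hM_prob : ∀ᵐ ω ∂P, IsProbabilityMeasure (M ω))
    (hN : Measurable[𝓖] N) (hN_prob : ∀ᵐ ω ∂P, IsProbabilityMeasure (N ω)) (hp : 1 ≤ p)
    {d : Y → Y → ℝ≥0∞} (hd : ∀ x y, d x y ≠ ∞) (T : SimpleFunc X Y) :
    lowerLpNorm p P (fun ω => Wp p d ((η ω).map T) ((N ω).map T)) ≤
      lowerLpNorm p P fun ω => Wp p (fun x y => d (T x) (T y)) (M ω) (N ω) := by
  let t (x : X) : T.range := ⟨T x, T.mem_range_self x⟩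
  have t_meas : Measurable t := T.measurable.subtype_mk
  have prob_map {K : Ω → Measure X} (hK : ∀ᵐ ω ∂P, IsProbabilityMeasure (K ω)) :
      ∀ᵐ ω ∂P, IsProbabilityMeasure ((K ω).map t) :=
    hK.mono fun _ _ => Measure.isProbabilityMeasure_map t_meas.aemeasurable
  have map_T (m : Measure X) : m.map T = (m.map t).map Subtype.val :=
    (Measure.map_map measurable_subtype_coe t_meas).symm
  have meas_map := Measure.measurable_map t t_meas
  calc lowerLpNorm p P (fun ω => Wp p d ((η ω).map T) ((N ω).map T))
      ≤ lowerLpNorm p P fun ω => Wp p (fun x y : T.range => d x y) ((η ω).map t) ((N ω).map t) :=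
        lowerLpNorm_mono hp fun ω => by
          simp only [map_T]
          exact Wp_map_le hp measurable_subtype_coe _ _
    _ ≤ lowerLpNorm p P fun ω => Wp p (fun x y : T.range => d x y) ((M ω).map t) ((N ω).map t) := by
        unfold lowerLpNorm
        gcongr ?_ ^ _
        exact (h.map t_meas).lintegral_Wp_rpow_le h𝓖 (meas_map.comp hM) (prob_map hM_prob)
          (meas_map.comp hN) (prob_map hN_prob) hp fun x y => hd x y
    _ ≤ _ := lowerLpNorm_mono hp fun ω => Wp_map_le hp t_meas _ _

lemma lowerLpNorm_Wp_le_of_simpleFunc [StandardBorelSpace X] (h : IsCondBarycenter 𝓖 P M η)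
    (h𝓖 : 𝓖 ≤ mΩ) (hM : Measurable M) (hM_prob : ∀ᵐ ω ∂P, IsProbabilityMeasure (M ω))
    (hN : Measurable[𝓖] N) (hN_prob : ∀ᵐ ω ∂P, IsProbabilityMeasure (N ω)) (hp : 1 ≤ p)
    (hd : Measurable (Function.uncurry d)) (hd_top : ∀ x y, d x y ≠ ∞)
    (hsymm : ∀ x y, d x y = d y x) (htri : ∀ x y z, d x z ≤ d x y + d y z) (T : SimpleFunc X X)
    {ε : ℝ≥0∞} (hεM : lowerLpNorm p (P.bind M) (fun x => d x (T x)) ≤ ε)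
    (hεN : lowerLpNorm p (P.bind N) (fun x => d x (T x)) ≤ ε) :
    lowerLpNorm p P (fun ω => Wp p d (η ω) (N ω)) ≤
      lowerLpNorm p P (fun ω => Wp p d (M ω) (N ω)) + 4 * ε := by
  have e_meas : Measurable fun x => d x (T x) := hd.comp (measurable_id.prodMk T.measurable)
  have N_meas : Measurable N := hN.mono h𝓖 le_rfl
  have d_T_le (x y : X) : d (T x) (T y) ≤ d x (T x) + d x y + d y (T y) := calc
    d (T x) (T y) ≤ d (T x) x + (d x y + d y (T y)) := (htri _ x _).trans (by gcongr; exact htri ..)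
    _ = d x (T x) + d x y + d y (T y) := by rw [hsymm (T x), add_assoc]
  have η_le : ∀ᵐ ω ∂P, Wp p d (η ω) (N ω) ≤ lowerLpNorm p (η ω) (fun x => d x (T x)) +
      Wp p d ((η ω).map T) ((N ω).map T) + lowerLpNorm p (N ω) (fun x => d x (T x)) := by
    filter_upwards [h.isProbabilityMeasure, hN_prob] with ω _ _
    exact Wp_le_add_Wp_map_add hp hd hsymm htri T.measurable _ _
  have le_M : ∀ᵐ ω ∂P, Wp p (fun x y => d (T x) (T y)) (M ω) (N ω) ≤
      lowerLpNorm p (M ω) (fun x => d x (T x)) + Wp p d (M ω) (N ω) +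
        lowerLpNorm p (N ω) (fun x => d x (T x)) :=
    ae_of_all _ fun ω => Wp_le_add_Wp_add hp e_meas e_meas d_T_le _ _
  calc lowerLpNorm p P (fun ω => Wp p d (η ω) (N ω))
      ≤ ε + lowerLpNorm p P (fun ω => Wp p d ((η ω).map T) ((N ω).map T)) + ε := by
        grw [lowerLpNorm_le_bind_add_bind hp (h.measurable.mono h𝓖 le_rfl) N_meas e_meas η_le,
          h.bind_eq h𝓖 hM.aemeasurable, hεM, hεN]
    _ ≤ ε + (ε + lowerLpNorm p P (fun ω => Wp p d (M ω) (N ω)) + ε) + ε := by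
        grw [h.lowerLpNorm_Wp_map_le h𝓖 hM hM_prob hN hN_prob hp hd_top T,
          lowerLpNorm_le_bind_add_bind hp hM N_meas e_meas le_M, hεM, hεN]
    _ = lowerLpNorm p P (fun ω => Wp p d (M ω) (N ω)) + 4 * ε := by ring

end IsCondBarycenter

end Quantization

section Jensen

variable {p : ℝ} {Y : Type*} [MeasurableSpace Y]

lemma tendsto_lowerLpNorm_edist_approxOn [PseudoEMetricSpace Y] [OpensMeasurableSpace Y]
    [SecondCountableTopology Y] (hp : 1 ≤ p) {Q : Measure Y} {x : Y}
    (hQ : lowerLpNorm p Q (edist x) ≠ ∞) :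
    Tendsto (fun k => lowerLpNorm p Q fun y =>
      edist y (SimpleFunc.approxOn id measurable_id Set.univ x (Set.mem_univ x) k y))
      atTop (𝓝 0) := by
  have hp0 : 0 < p := by positivity
  set T := SimpleFunc.approxOn id measurable_id Set.univ x (Set.mem_univ x)
  have edist_T_le (k : ℕ) (y : Y) : edist y (T k y) ≤ edist x y := by
    rw [edist_comm]
    exact SimpleFunc.edist_approxOn_le (f := id) measurable_id (Set.mem_univ x) y k
  have edist_T_tendsto (y : Y) : Tendsto (fun k => edist y (T k y) ^ p) atTop (𝓝 0) := by
    have T_tendsto : Tendsto (fun k => T k y) atTop (𝓝 y) :=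
      SimpleFunc.tendsto_approxOn (f := id) measurable_id (Set.mem_univ x) (by simp)
    simpa [hp0] using ((tendsto_const_nhds (x := y)).edist T_tendsto).ennrpow_const p
  have lintegral_tendsto : Tendsto (fun k => ∫⁻ y, edist y (T k y) ^ p ∂Q) atTop (𝓝 0) := by
    rw [← lintegral_zero (μ := Q)]
    refine tendsto_lintegral_of_dominated_convergence (fun y => edist x y ^ p)
      (fun k => (measurable_id.edist (T k).measurable).pow_const _)
      (fun k => ae_of_all _ fun y => ENNReal.rpow_le_rpow (edist_T_le k y) hp0.le) ?_
      (ae_of_all _ edist_T_tendsto)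
    rw [← lowerLpNorm_rpow hp]
    finiteness
  simpa [lowerLpNorm, hp0] using lintegral_tendsto.ennrpow_const (1 / p)

variable [PseudoMetricSpace Y] [SecondCountableTopology Y] [BorelSpace Y] [StandardBorelSpace Y]

lemma IsCondBarycenter.lowerLpNorm_Wp_edist_le {Ω : Type*} {𝓖 mΩ : MeasurableSpace Ω}
    {P : Measure Ω} [IsFiniteMeasure P] {M N η : Ω → Measure Y} (h : IsCondBarycenter 𝓖 P M η)
    (h𝓖 : 𝓖 ≤ mΩ) (hM : Measurable M) (hM_prob : ∀ᵐ ω ∂P, IsProbabilityMeasure (M ω))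
    (hN : Measurable[𝓖] N) (hN_prob : ∀ᵐ ω ∂P, IsProbabilityMeasure (N ω)) (hp : 1 ≤ p) {x : Y}
    (hM_moment : lowerLpNorm p (P.bind M) (edist x) ≠ ∞)
    (hN_moment : lowerLpNorm p (P.bind N) (edist x) ≠ ∞) :
    lowerLpNorm p P (fun ω => Wp p edist (η ω) (N ω)) ≤
      lowerLpNorm p P fun ω => Wp p edist (M ω) (N ω) := by
  have add_tendsto : Tendsto (fun ε : ℝ≥0∞ =>
      lowerLpNorm p P (fun ω => Wp p edist (M ω) (N ω)) + 4 * ε) (𝓝[>] 0)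
      (𝓝 (lowerLpNorm p P fun ω => Wp p edist (M ω) (N ω))) := by
    have mul_tendsto := ENNReal.Tendsto.const_mul (a := 4) (tendsto_id (x := 𝓝 (0 : ℝ≥0∞)))
      (.inr (by finiteness))
    simpa using (tendsto_const_nhds.add mul_tendsto).mono_left nhdsWithin_le_nhds
  refine ge_of_tendsto add_tendsto (eventually_mem_nhdsWithin.mono fun ε (hε : 0 < ε) => ?_)
  obtain ⟨k, hkM, hkN⟩ :=
    (((tendsto_lowerLpNorm_edist_approxOn hp hM_moment).eventually (ge_mem_nhds hε)).and
      ((tendsto_lowerLpNorm_edist_approxOn hp hN_moment).eventually (ge_mem_nhds hε))).exists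
  exact h.lowerLpNorm_Wp_le_of_simpleFunc h𝓖 hM hM_prob hN hN_prob hp measurable_edist
    edist_ne_top edist_comm edist_triangle _ hkM hkN

end Jensen

section Moments

variable {Y : Type*} [PseudoMetricSpace Y] [MeasurableSpace Y] [OpensMeasurableSpace Y] {p : ℝ}

lemma MemPp.lowerLpNorm_edist_ne_top (hp : 1 ≤ p) {m : Measure Y} (hm : MemPp p edist m) (x : Y) :
    lowerLpNorm p m (edist x) ≠ ∞ := by
  obtain ⟨_, y, hy⟩ := hm
  have norm_ne_top : lowerLpNorm p m (edist y) ≠ ∞ :=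
    ENNReal.rpow_ne_top_of_nonneg (by positivity) hy
  refine ne_top_of_le_ne_top (by finiteness) (b := edist x y + lowerLpNorm p m (edist y)) ?_
  calc lowerLpNorm p m (edist x) ≤ lowerLpNorm p m ((fun _ => edist x y) + edist y) :=
        lowerLpNorm_mono hp fun z => edist_triangle x y z
    _ ≤ lowerLpNorm p m (fun _ => edist x y) + lowerLpNorm p m (edist y) :=
        lowerLpNorm_add_le hp _ (by fun_prop)
    _ = edist x y + lowerLpNorm p m (edist y) := by rw [lowerLpNorm_const hp]

variable {A : Type*} {dA : A → A → ℝ≥0∞}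

lemma Wp_le_liftDist {B : Type*} [MeasurableSpace B] {dB : B → B → ℝ≥0∞} (hp : 1 ≤ p)
    (u v : A × Measure B) : Wp p dB u.2 v.2 ≤ liftDist p dA dB u v := by
  rw [← rpow_rpow_one_div hp (Wp p dB u.2 v.2)]
  exact ENNReal.rpow_le_rpow le_add_self (by positivity)

lemma MemPpLift.ae_isProbabilityMeasure [MeasurableSpace A] {B : Type*} [MeasurableSpace B]
    {dB : B → B → ℝ≥0∞} {μ : Measure (A × Measure B)} (hμ : MemPpLift p dA dB μ) :
    ∀ᵐ z ∂μ, IsProbabilityMeasure z.2 :=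
  hμ.2.1.mono fun _ hz => hz.1

lemma MemPpLift.lowerLpNorm_bind_snd_edist_ne_top [MeasurableSpace A] (hp : 1 ≤ p)
    {μ : Measure (A × Measure Y)} (hμ : MemPpLift p dA edist μ) (x : Y) :
    lowerLpNorm p (μ.bind Prod.snd) (edist x) ≠ ∞ := by
  obtain ⟨_, -, z₀, hz₀, lift_ne_top⟩ := hμ
  have z₀_moment := hz₀.lowerLpNorm_edist_ne_top hp x
  have lift_moment : lowerLpNorm p μ (liftDist p dA edist z₀) ≠ ∞ :=
    ENNReal.rpow_ne_top_of_nonneg (by positivity) lift_ne_top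
  rw [← lowerLpNorm_bind hp measurable_snd.aemeasurable (by fun_prop)]
  refine ne_top_of_le_ne_top (ENNReal.add_ne_top.2 ⟨lift_moment, z₀_moment⟩) ?_
  calc lowerLpNorm p μ (fun z => lowerLpNorm p z.2 (edist x))
      ≤ lowerLpNorm p μ (liftDist p dA edist z₀ + fun _ => lowerLpNorm p z₀.2 (edist x)) :=
        lowerLpNorm_mono hp fun z => by
          grw [lowerLpNorm_le_add_Wp hp (by fun_prop) (edist_triangle x) z₀.2 z.2,
            Wp_le_liftDist hp z₀ z, add_comm]
          rfl
    _ ≤ lowerLpNorm p μ (liftDist p dA edist z₀) + lowerLpNorm p z₀.2 (edist x) := by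
        grw [lowerLpNorm_add_le hp _ aemeasurable_const, lowerLpNorm_const hp]

end Moments

section Lift

variable {A B : Type*} [MeasurableSpace A] {p : ℝ} {dA : A → A → ℝ≥0∞}

lemma IsCondBar.lintegral_Wp_rpow_le [PseudoMetricSpace B] [SecondCountableTopology B]
    [MeasurableSpace B] [BorelSpace B] [StandardBorelSpace B] (hp : 1 ≤ p)
    {μ ν : Measure (A × Measure B)} (hμ : MemPpLift p dA edist μ) (hν : MemPpLift p dA edist ν)
    {γ : Measure ((A × Measure B) × (A × Measure B))} (hγ : γ ∈ Cpl μ ν)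
    {η : (A × Measure B) × (A × Measure B) → Measure B} (hη : IsCondBar γ η) :
    ∫⁻ z, Wp p edist (η z) z.2.2 ^ p ∂γ ≤ ∫⁻ z, Wp p edist z.1.2 z.2.2 ^ p ∂γ := by
  have := hμ.1
  have := Cpl.isProbabilityMeasure hγ
  have fst_prob : ∀ᵐ z ∂γ, IsProbabilityMeasure z.1.2 :=
    Cpl.ae_fst hγ hμ.ae_isProbabilityMeasure
  have snd_prob : ∀ᵐ z ∂γ, IsProbabilityMeasure z.2.2 :=
    Cpl.ae_snd hγ hν.ae_isProbabilityMeasure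
  obtain ⟨z, _⟩ := fst_prob.exists
  obtain ⟨b⟩ := z.1.2.nonempty_of_neZero
  have fst_moment : lowerLpNorm p (γ.bind (Prod.snd ∘ Prod.fst)) (edist b) ≠ ∞ := by
    rw [Cpl.bind_comp_fst hγ measurable_snd]
    exact hμ.lowerLpNorm_bind_snd_edist_ne_top hp b
  have snd_moment : lowerLpNorm p (γ.bind (Prod.snd ∘ Prod.snd)) (edist b) ≠ ∞ := by
    rw [Cpl.bind_comp_snd hγ measurable_snd]
    exact hν.lowerLpNorm_bind_snd_edist_ne_top hp b
  have norm_le := hη.isCondBarycenter.lowerLpNorm_Wp_edist_le measurable_snd.comap_le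
    (by fun_prop) fst_prob (measurable_snd.comp (comap_measurable _)) snd_prob hp
    fst_moment snd_moment
  rw [← lowerLpNorm_rpow hp, ← lowerLpNorm_rpow hp]
  exact ENNReal.rpow_le_rpow norm_le (by positivity)

theorem CWbar_le_AWbar_general [PseudoMetricSpace B] [SecondCountableTopology B]
    [MeasurableSpace B] [BorelSpace B] [StandardBorelSpace B]
    (hdA : Measurable (Function.uncurry dA)) (hp : 1 ≤ p) {μ ν : Measure (A × Measure B)}
    (hμ : MemPpLift p dA edist μ) (hν : MemPpLift p dA edist ν) :
    CWbar p dA edist μ ν ≤ AWbar p dA edist μ ν := by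
  refine le_iInf₂ fun γ hγ => ?_
  have := hμ.1
  have := Cpl.isProbabilityMeasure hγ
  obtain ⟨η, hη⟩ := exists_isCondBar (Cpl.ae_fst hγ hμ.ae_isProbabilityMeasure)
  have dA_meas : Measurable fun z : (A × Measure B) × (A × Measure B) => dA z.1.1 z.2.1 ^ p := by
    fun_prop
  refine (iInf₂_le_of_le γ hγ (iInf₂_le η hη)).trans ?_
  gcongr ?_ ^ _
  simp only [liftDist, rpow_one_div_rpow hp, lintegral_add_left dA_meas]
  exact add_le_add_right (hη.lintegral_Wp_rpow_le hp hμ hν hγ) _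

end Lift

/-- **Lemma 4.5.**  `CW̄_p ≤ AW̄_p` on `𝒫_p(𝒳₁ × 𝒫_p(𝒳₂))`. -/
theorem CWbar_le_AWbar
    {X1 X2 : Type} [MetricSpace X1] [CompleteSpace X1] [SecondCountableTopology X1]
    [MeasurableSpace X1] [BorelSpace X1] [Nonempty X1]
    [MetricSpace X2] [CompleteSpace X2] [SecondCountableTopology X2]
    [MeasurableSpace X2] [BorelSpace X2] [Nonempty X2]
    (p : ℝ) (hp : 1 ≤ p)
    (μ ν : Measure (X1 × Measure X2))
    (hμ : MemPpLift p (edist : X1 → X1 → ℝ≥0∞) (edist : X2 → X2 → ℝ≥0∞) μ)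
    (hν : MemPpLift p (edist : X1 → X1 → ℝ≥0∞) (edist : X2 → X2 → ℝ≥0∞) ν) :
    CWbar p (edist : X1 → X1 → ℝ≥0∞) (edist : X2 → X2 → ℝ≥0∞) μ ν ≤
      AWbar p edist edist μ ν :=
  CWbar_le_AWbar_general measurable_edist hp hμ hν

end AWPaper
end
end
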